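/- There is no function c : ℝ² → Fin 4 such that c x ≠ c y for all x, y ∈ ℝ² with dist(x,y) = 1. Equivalently, the chromatic number of the plane (the minimum number of colors needed to color all points of ℝ² so that any two points at Euclidean distance exactly 1 receive different colors) is at least 5. -/

import Mathlib

/-!
The chromatic number of the plane is at least five.

The proof has two parts.
* Part B: no proper 4-colouring of the plane has a monochromatic equilateral triangle of side `√3`.
* Part A: a proper 4-colouring without such triangles gives equal colours to points at distance `4`,
  which is absurd (rotate one of them by a small angle).

Both parts are finite statements; they are established by a small verified refutation checker,
run by the kernel on explicit certificates. Vertices of the finite graphs are numbered from `1`.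
A state is a natural number whose bit `4 * v + k` says that vertex `v` does not have colour `k`.
-/

namespace HN

/-! ### The checker -/

/-- `force n f = f n`, but the kernel evaluates `n` first. -/
noncomputable def force {α : Type} (n : Nat) (f : Nat → α) : α :=
  Nat.rec (motive := fun _ => α) (f 0) (fun m _ => f (Nat.succ m)) n

theorem force_eq {α : Type} (n : Nat) (f : Nat → α) : force n f = f n := by
  cases n <;> rfl

/-- Binary trees used as lookup tables. -/
inductive Tree where
  | leaf (n : Nat) : Tree
  | node (l r : Tree) : Tree

/-- Lookup, least significant bit first. -/
noncomputable def Tree.get (t : Tree) : Nat → Nat :=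
  Tree.rec (motive := fun _ => Nat → Nat) (fun n _ => n)
    (fun _ _ gl gr i => cond (Nat.beq (Nat.land i 1) 0) (gl (Nat.shiftRight i 1))
      (gr (Nat.shiftRight i 1))) t

/-- The digits of `L` in base `B`, least significant first. -/
noncomputable def digits (B fuel : Nat) : Nat → List Nat :=
  Nat.rec (motive := fun _ => Nat → List Nat) (fun _ => [])
    (fun _ ih L => cond (Nat.beq L 0) [] (List.cons (Nat.mod L B) (ih (Nat.div L B)))) fuel

/-- The state in which all vertices of a list do not have colour `0`. -/
noncomputable def maskOf (l : List Nat) : Nat :=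
  List.rec (motive := fun _ => Nat) 0
    (fun w _ acc => Nat.lor acc (Nat.shiftLeft 1 (Nat.mul 4 w))) l

/-- A clause, decoded from a list of entries `16 * v + m`. -/
noncomputable def clauseOf (l : List Nat) : Nat :=
  List.rec (motive := fun _ => Nat) 0
    (fun e _ acc => Nat.lor acc (Nat.shiftLeft (Nat.mod e 16) (Nat.mul 4 (Nat.div e 16)))) l

/-- Apply `k` to the `i`-th member of a list; `false` if there is none. -/
noncomputable def lookup (l : List Nat) : Nat → (Nat → Bool) → Bool :=
  List.rec (motive := fun _ => Nat → (Nat → Bool) → Bool) (fun _ _ => false)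
    (fun a _ ih i k => Nat.rec (motive := fun _ => Bool) (k a) (fun j _ => ih j k) i) l

/-- The four bits of vertex `v` in a state. -/
noncomputable def nib (X v : Nat) : Nat := Nat.land (Nat.shiftRight X (Nat.mul 4 v)) 15

/-- Refute the state `X` by the propagation steps coded in `S`. -/
noncomputable def go (M : Nat → Nat) (DB : List Nat) (fuel : Nat) : Nat → Nat → Bool :=
  Nat.rec (motive := fun _ => Nat → Nat → Bool) (fun _ _ => false)
    (fun _ ih X S =>
      force (Nat.mod S 8192) fun q =>
      force (Nat.div S 8192) fun S' =>
      cond (Nat.ble q 4095)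
        (force (Nat.div q 4) fun v =>
          force (nib X v) fun b =>
          cond (Nat.beq (Nat.add b (Nat.pow 2 (Nat.mod q 4))) 15)
            (force (Nat.lor X (Nat.shiftLeft (M v) (Nat.mod q 4))) fun X' => ih X' S')
            (Nat.beq b 15))
        (lookup DB (Nat.sub q 4096) fun C =>
          force (Nat.div (Nat.mod S' 8192) 4) fun v =>
          force (Nat.lor X (Nat.shiftLeft 15 (Nat.mul 4 v))) fun Y =>
          cond (Nat.beq (Nat.lor Y C) Y)
            (force (Nat.lor X (Nat.shiftLeft (Nat.sub 15 (nib C v)) (Nat.mul 4 v))) fun X' =>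
              ih X' (Nat.div S' 8192))
            false)) fuel

/-- Check a list of clauses with their refutations; succeed when the empty clause is reached. -/
noncomputable def checkAll (M : Nat → Nat) (P : Nat) (prf : List (Nat × Nat)) : List Nat → Bool :=
  List.rec (motive := fun _ => List Nat → Bool) (fun _ => false)
    (fun e _ ih DB =>
      force (clauseOf (digits 16384 1000 e.1)) fun C =>
      cond (go M DB 100000 (Nat.lor P C) e.2)
        (cond (Nat.beq C 0) true (ih (C :: DB))) false) prf

/-- The colouring `c` is compatible with the state `X`. -/
def Resp (c : Nat → Fin 4) (X : Nat) : Prop := ∀ v, X.testBit (4 * v + (c v : Nat)) = false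

theorem lookup_sound (l : List Nat) : ∀ (i : Nat) (k : Nat → Bool), lookup l i k = true →
    ∃ a ∈ l, k a = true := by
  induction l with
  | nil => intro i k h; exact absurd h (by simp [lookup])
  | cons a l ih =>
    intro i k h
    cases i with
    | zero => exact ⟨a, by simp, h⟩
    | succ j =>
      obtain ⟨b, hb, hk⟩ := ih j k h
      exact ⟨b, by simp [hb], hk⟩

theorem nib_testBit (X v j : Nat) (hj : j < 4) : (nib X v).testBit j = X.testBit (4 * v + j) := by
  have h : nib X v = (X >>> (4 * v)) &&& 15 := rfl
  have h15 : Nat.testBit 15 j = true := by interval_cases j <;> rfl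
  rw [h, Nat.testBit_and, Nat.testBit_shiftRight, h15, Bool.and_true]

theorem nib_color (b k j : Nat) (hk : k < 4) (hj : j < 4) (h : b + 2 ^ k = 15)
    (hb : b.testBit j = false) : j = k := by
  have hb2 : b = 15 - 2 ^ k := by omega
  subst hb2
  interval_cases k <;> interval_cases j <;>
    first | rfl | (exact absurd hb (by decide))

theorem resp_lor {c : Nat → Fin 4} {X Y : Nat} (hX : Resp c X) (hY : Resp c Y) :
    Resp c (Nat.lor X Y) := by
  intro v
  have h : Nat.lor X Y = X ||| Y := rfl
  rw [h, Nat.testBit_or, hX v, hY v]; rfl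

/-- `M` describes edges between differently coloured vertices. -/
def GoodM (c : Nat → Fin 4) (M : Nat → Nat) : Prop :=
  ∀ v < 1024, ∀ i, (M v).testBit i = true → i % 4 = 0 ∧ c v ≠ c (i / 4)

theorem go_sound (c : Nat → Fin 4) (M : Nat → Nat) (hM : GoodM c M) (DB : List Nat)
    (hDB : ∀ C ∈ DB, ¬ Resp c C) (fuel : Nat) :
    ∀ X S, go M DB fuel X S = true → ¬ Resp c X := by
  induction fuel with
  | zero => intro X S h; exact absurd h (by simp [go])
  | succ f ih =>
    intro X S h hX
    have h' : force (Nat.mod S 8192) (fun q =>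
      force (Nat.div S 8192) fun S' =>
      cond (Nat.ble q 4095)
        (force (Nat.div q 4) fun v =>
          force (nib X v) fun b =>
          cond (Nat.beq (Nat.add b (Nat.pow 2 (Nat.mod q 4))) 15)
            (force (Nat.lor X (Nat.shiftLeft (M v) (Nat.mod q 4))) fun X' => go M DB f X' S')
            (Nat.beq b 15))
        (lookup DB (Nat.sub q 4096) fun C =>
          force (Nat.div (Nat.mod S' 8192) 4) fun v =>
          force (Nat.lor X (Nat.shiftLeft 15 (Nat.mul 4 v))) fun Y =>
          cond (Nat.beq (Nat.lor Y C) Y)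
            (force (Nat.lor X (Nat.shiftLeft (Nat.sub 15 (nib C v)) (Nat.mul 4 v))) fun X' =>
              go M DB f X' (Nat.div S' 8192))
            false)) = true := h
    clear h
    simp only [force_eq] at h'
    generalize Nat.mod S 8192 = q at h'
    generalize Nat.div S 8192 = S' at h'
    cases hq : Nat.ble q 4095 with
    | true =>
      rw [hq, cond_true] at h'
      have hq' : q ≤ 4095 := Nat.le_of_ble_eq_true hq
      have hv : Nat.div q 4 < 1024 := by
        have : Nat.div q 4 = q / 4 := rfl
        omega
      have hk : Nat.mod q 4 < 4 := by
        have : Nat.mod q 4 = q % 4 := rfl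
        omega
      generalize Nat.div q 4 = v at h' hv
      generalize Nat.mod q 4 = k at h' hk
      have hnb : ∀ j < 4, (nib X v).testBit j = X.testBit (4 * v + j) := nib_testBit X v
      generalize nib X v = b at h' hnb
      have hbc : b.testBit (c v) = false := by rw [hnb _ (c v).2]; exact hX v
      cases hb : Nat.beq (Nat.add b (Nat.pow 2 k)) 15 with
      | true =>
        rw [hb, cond_true] at h'
        have hb' : b + 2 ^ k = 15 := Nat.eq_of_beq_eq_true hb
        have hck := nib_color b k (c v) hk (c v).2 hb' hbc
        refine ih _ _ h' (resp_lor hX ?_)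
        intro w
        have e : Nat.shiftLeft (M v) k = (M v) <<< k := rfl
        rw [e, Nat.testBit_shiftLeft]
        by_contra hne
        rw [Bool.not_eq_false, Bool.and_eq_true, decide_eq_true_eq] at hne
        obtain ⟨h1, h2⟩ := hne
        obtain ⟨h3, h4⟩ := hM v hv _ h2
        have hw := (c w).2
        have h5 : (c w : Nat) = k := by omega
        have h6 : (4 * w + (c w : Nat) - k) / 4 = w := by omega
        rw [h6] at h4
        exact h4 (Fin.ext (hck.trans h5.symm))
      | false =>
        rw [hb, cond_false] at h'
        have hb' : b = 15 := Nat.eq_of_beq_eq_true h'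
        rw [hb'] at hbc
        have hcv := (c v).2
        generalize (c v : Nat) = j at hbc hcv
        interval_cases j <;> exact absurd hbc (by decide)
    | false =>
      rw [hq, cond_false] at h'
      obtain ⟨C, hC, h2⟩ := lookup_sound _ _ _ h'
      clear h'
      generalize Nat.div (Nat.mod S' 8192) 4 = v at h2
      cases hb : Nat.beq (Nat.lor (Nat.lor X (Nat.shiftLeft 15 (Nat.mul 4 v))) C)
          (Nat.lor X (Nat.shiftLeft 15 (Nat.mul 4 v))) with
      | false => rw [hb, cond_false] at h2; exact absurd h2 (by decide)
      | true =>
        rw [hb, cond_true] at h2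
        have hb' : ((X ||| (15 <<< (4 * v))) ||| C) = (X ||| (15 <<< (4 * v))) :=
          Nat.eq_of_beq_eq_true hb
        refine ih _ _ h2 (resp_lor hX ?_)
        -- the clause `C` must be satisfied at `v`
        have hCv : C.testBit (4 * v + (c v : Nat)) = true := by
          by_contra hne
          rw [Bool.not_eq_true] at hne
          apply hDB C hC
          intro w
          by_cases hwv : w = v
          · rw [hwv]; exact hne
          · by_contra hcon
            rw [Bool.not_eq_false] at hcon
            have h3 := congrArg (fun n => Nat.testBit n (4 * w + (c w : Nat))) hb'
            simp only [Nat.testBit_or, Nat.testBit_shiftLeft, hX w, hcon, Bool.or_true,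
              Bool.false_or] at h3
            have h4 := h3.symm
            rw [Bool.and_eq_true, decide_eq_true_eq] at h4
            obtain ⟨h5, h6⟩ := h4
            have hlt : 4 ≤ 4 * w + (c w : Nat) - 4 * v := by
              have := (c w).2
              omega
            have : Nat.testBit 15 (4 * w + (c w : Nat) - 4 * v) = false := by
              apply Nat.testBit_lt_two_pow
              calc 15 < 2 ^ 4 := by norm_num
                _ ≤ _ := Nat.pow_le_pow_right (by norm_num) hlt
            rw [this] at h6
            exact absurd h6 (by decide)
        have hCn : (nib C v).testBit (c v) = true := by rw [nib_testBit _ _ _ (c v).2]; exact hCv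
        have hn : nib C v < 16 := by
          have : nib C v = (C >>> (4 * v)) &&& 15 := rfl
          rw [this]
          exact lt_of_le_of_lt Nat.and_le_right (by norm_num)
        intro w
        have e : Nat.shiftLeft (Nat.sub 15 (nib C v)) (Nat.mul 4 v)
          = (15 - nib C v) <<< (4 * v) := rfl
        rw [e, Nat.testBit_shiftLeft]
        by_contra hne
        rw [Bool.not_eq_false, Bool.and_eq_true, decide_eq_true_eq] at hne
        obtain ⟨h1, h3⟩ := hne
        have hsmall : 4 * w + (c w : Nat) - 4 * v < 4 := by
          by_contra hge
          have : Nat.testBit (15 - nib C v) (4 * w + (c w : Nat) - 4 * v) = false := by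
            apply Nat.testBit_lt_two_pow
            calc 15 - nib C v < 2 ^ 4 := by omega
              _ ≤ _ := Nat.pow_le_pow_right (by norm_num) (by omega)
          rw [this] at h3
          exact absurd h3 (by decide)
        have hcw := (c w).2
        obtain rfl : w = v := by omega
        have h7 : 4 * w + (c w : Nat) - 4 * w = (c w : Nat) := by omega
        rw [h7] at h3
        generalize nib C w = b at hCn hn h3
        generalize (c w : Nat) = j at hCn h3 hcw
        revert hCn h3
        interval_cases j <;> interval_cases b <;> decide

theorem checkAll_sound (c : Nat → Fin 4) (M : Nat → Nat) (hM : GoodM c M) (P : Nat)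
    (hP : Resp c P) (prf : List (Nat × Nat)) :
    ∀ DB : List Nat, (∀ C ∈ DB, ¬ Resp c C) → checkAll M P prf DB = true → False := by
  induction prf with
  | nil => intro DB _ h; exact absurd h (by simp [checkAll])
  | cons e prf ih =>
    intro DB hDB h
    have h' : force (clauseOf (digits 16384 1000 e.1)) (fun C =>
      cond (go M DB 100000 (Nat.lor P C) e.2)
        (cond (Nat.beq C 0) true (checkAll M P prf (C :: DB))) false) = true := h
    rw [force_eq] at h'
    generalize clauseOf (digits 16384 1000 e.1) = C at h'
    cases hg : go M DB 100000 (Nat.lor P C) e.2 with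
    | false => rw [hg, cond_false] at h'; exact absurd h' (by decide)
    | true =>
      rw [hg, cond_true] at h'
      have hC : ¬ Resp c C := fun hC => go_sound c M hM DB hDB _ _ _ hg (resp_lor hP hC)
      cases hz : Nat.beq C 0 with
      | true =>
        have : C = 0 := Nat.eq_of_beq_eq_true hz
        apply hC
        intro v
        rw [this]
        exact Nat.zero_testBit _
      | false =>
        rw [hz, cond_false] at h'
        refine ih (C :: DB) ?_ h'
        intro C' hC'
        rcases List.mem_cons.mp hC' with rfl | h2
        · exact hC
        · exact hDB _ h2

theorem maskOf_testBit (l : List Nat) (i : Nat) (h : (maskOf l).testBit i = true) :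
    i % 4 = 0 ∧ i / 4 ∈ l := by
  induction l with
  | nil => exact absurd h (by simp [maskOf])
  | cons w l ih =>
    have e : maskOf (w :: l) = maskOf l ||| 1 <<< (4 * w) := rfl
    rw [e, Nat.testBit_or, Bool.or_eq_true] at h
    rcases h with h | h
    · obtain ⟨h1, h2⟩ := ih h
      exact ⟨h1, List.mem_cons_of_mem _ h2⟩
    · rw [Nat.one_shiftLeft, Nat.testBit_two_pow, decide_eq_true_eq] at h
      subst h
      refine ⟨by omega, ?_⟩
      have : 4 * w / 4 = w := by omega
      rw [this]
      exact List.mem_cons_self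

/-! ### Geometry -/

/-- Coordinates of a point: `(a + d √3 √m + i (b √3 + e √m)) / D`. -/
structure Co where
  a : Int
  b : Int
  e : Int
  d : Int

/-- Decode coordinates from one number. -/
noncomputable def co (n : Nat) : Co :=
  ⟨Int.sub (Int.ofNat (Nat.mod n 256)) 128,
   Int.sub (Int.ofNat (Nat.mod (Nat.div n 256) 256)) 128,
   Int.sub (Int.ofNat (Nat.mod (Nat.div n 65536) 256)) 128,
   Int.sub (Int.ofNat (Nat.div n 16777216)) 128⟩

/-- The point with the given coordinates. -/
noncomputable def pt (m D : Nat) (p : Co) : ℂ :=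
  ⟨(p.a + p.d * (√3 * √m)) / D, (p.b * √3 + p.e * √m) / D⟩

/-- Difference of coordinates. -/
def Co.sub (p q : Co) : Co := ⟨Int.sub p.a q.a, Int.sub p.b q.b, Int.sub p.e q.e, Int.sub p.d q.d⟩

/-- Test for unit length. -/
def isUnit (m D : Nat) (p : Co) : Bool :=
  and (decide (p.a * p.a + 3 * m * (p.d * p.d) + 3 * (p.b * p.b) + m * (p.e * p.e) = D * D))
    (decide (p.a * p.d + p.b * p.e = 0))

theorem isUnit_norm {m D : Nat} (hD : 0 < D) {p q : Co} (h : isUnit m D (p.sub q) = true) :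
    ‖pt m D p - pt m D q‖ = 1 := by
  unfold isUnit at h
  rw [Bool.and_eq_true, decide_eq_true_eq, decide_eq_true_eq] at h
  obtain ⟨h1, h2⟩ := h
  have e1 : ∀ x y : Int, Int.sub x y = x - y := fun _ _ => rfl
  simp only [Co.sub, e1] at h1 h2
  have h1' := congrArg (Int.cast : Int → ℝ) h1
  have h2' := congrArg (Int.cast : Int → ℝ) h2
  push_cast at h1' h2'
  have hs : √(3 : ℝ) ^ 2 = 3 := Real.sq_sqrt (by norm_num)
  have ht : √(m : ℝ) ^ 2 = m := Real.sq_sqrt (by positivity)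
  have hD' : (D : ℝ) ≠ 0 := by positivity
  rw [← sq_eq_sq₀ (norm_nonneg _) zero_le_one, Complex.sq_norm, Complex.normSq_apply]
  simp only [pt, Complex.sub_re, Complex.sub_im]
  field_simp
  generalize √(3 : ℝ) = s at hs
  generalize √(m : ℝ) = t at ht
  have key : ((p.a : ℝ) + p.d * s * t - (q.a + q.d * s * t)) ^ 2
      + (p.b * s + p.e * t - (q.b * s + q.e * t)) ^ 2 = D ^ 2 := by
    have hst : (s * t) ^ 2 = 3 * m := by rw [mul_pow, hs, ht]
    linear_combination h1' + 2 * s * t * h2' + ((p.d : ℝ) - q.d) ^ 2 * hst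
      + ((p.b : ℝ) - q.b) ^ 2 * hs + ((p.e : ℝ) - q.e) ^ 2 * ht
  linear_combination key

/-- Multiplication by a primitive third root of unity, doubled. -/
def Co.w2 (p : Co) : Co :=
  ⟨-p.a - 3 * p.b, p.a - p.b, -p.e + 3 * p.d, -p.d - p.e⟩

/-- Doubling. -/
def Co.dbl (p : Co) : Co := ⟨2 * p.a, 2 * p.b, 2 * p.e, 2 * p.d⟩

/-- Equality test. -/
def Co.eqb (p q : Co) : Bool :=
  and (and (decide (p.a = q.a)) (decide (p.b = q.b))) (and (decide (p.e = q.e)) (decide (p.d = q.d)))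

/-- The root of unity `exp (2 π i / 3)`. -/
noncomputable def om : ℂ := ⟨-1 / 2, √3 / 2⟩

theorem w2_pt {m D : Nat} (hD : 0 < D) {p x y : Co}
    (h : (y.sub p).dbl.eqb (x.sub p).w2 = true) :
    pt m D y = pt m D p + (pt m D x - pt m D p) * om := by
  simp only [Co.eqb, Bool.and_eq_true, decide_eq_true_eq] at h
  obtain ⟨⟨h1, h2⟩, h3, h4⟩ := h
  have e1 : ∀ x y : Int, Int.sub x y = x - y := fun _ _ => rfl
  simp only [Co.sub, Co.dbl, Co.w2, e1] at h1 h2 h3 h4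
  have h1' := congrArg (Int.cast : Int → ℝ) h1
  have h2' := congrArg (Int.cast : Int → ℝ) h2
  have h3' := congrArg (Int.cast : Int → ℝ) h3
  have h4' := congrArg (Int.cast : Int → ℝ) h4
  push_cast at h1' h2' h3' h4'
  have hs : √(3 : ℝ) ^ 2 = 3 := Real.sq_sqrt (by norm_num)
  have hD' : (D : ℝ) ≠ 0 := by positivity
  apply Complex.ext
  · simp only [pt, om, Complex.add_re, Complex.mul_re, Complex.sub_re, Complex.sub_im]
    generalize √(3 : ℝ) = s at hs
    generalize √(m : ℝ) = t
    field_simp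
    linear_combination h1' + s * t * h4' + ((x.b : ℝ) - p.b) * hs
  · simp only [pt, om, Complex.add_im, Complex.mul_im, Complex.sub_re, Complex.sub_im]
    generalize √(3 : ℝ) = s at hs
    generalize √(m : ℝ) = t
    field_simp
    linear_combination s * h2' + t * h3' - ((x.d : ℝ) - p.d) * t * hs

/-- Proper colourings of the plane. -/
def Proper (f : ℂ → Fin 4) : Prop := ∀ x y : ℂ, ‖x - y‖ = 1 → f x ≠ f y

theorem Proper.comp {f : ℂ → Fin 4} (hf : Proper f) (p q : ℂ) (hq : ‖q‖ = 1) :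
    Proper (fun z => f (p + q * z)) := by
  intro x y h
  apply hf
  have : p + q * x - (p + q * y) = q * (x - y) := by ring
  rw [this, norm_mul, hq, h, one_mul]

theorem Proper.perm {f : ℂ → Fin 4} (hf : Proper f) (σ : Equiv.Perm (Fin 4)) :
    Proper (fun z => σ (f z)) := by
  intro x y h e
  exact hf x y h (σ.injective e)

/-- The neighbours of a vertex according to a table. -/
noncomputable def nbrs (nb : Tree) (v : Nat) : List Nat := digits 1024 100 (nb.get v)

/-- Check that all neighbours in the list have distance one. -/
noncomputable def edgeList (m D : Nat) (crd : Tree) (p : Co) (l : List Nat) : Bool :=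
  List.rec (motive := fun _ => Bool) true
    (fun w _ ih => cond (isUnit m D (p.sub (co (crd.get w)))) ih false) l

/-- Check all edges of the vertices below `N`. -/
noncomputable def edgeCheck (m D : Nat) (crd nb : Tree) (N : Nat) : Bool :=
  Nat.rec (motive := fun _ => Bool) true
    (fun v ih => cond (edgeList m D crd (co (crd.get v)) (nbrs nb v)) ih false) N

theorem edgeList_sound {m D : Nat} {crd : Tree} {p : Co} {l : List Nat}
    (h : edgeList m D crd p l = true) : ∀ w ∈ l, isUnit m D (p.sub (co (crd.get w))) = true := by
  induction l with
  | nil => intro w hw; simp at hw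
  | cons a l ih =>
    have h' : cond (isUnit m D (p.sub (co (crd.get a)))) (edgeList m D crd p l) false = true := h
    cases ha : isUnit m D (p.sub (co (crd.get a))) with
    | false => rw [ha, cond_false] at h'; exact absurd h' (by decide)
    | true =>
      rw [ha, cond_true] at h'
      intro w hw
      rcases List.mem_cons.mp hw with rfl | h2
      · exact ha
      · exact ih h' w h2

theorem edgeCheck_sound {m D : Nat} {crd nb : Tree} {N : Nat}
    (h : edgeCheck m D crd nb N = true) : ∀ v < N, ∀ w ∈ nbrs nb v,
      isUnit m D ((co (crd.get v)).sub (co (crd.get w))) = true := by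
  induction N with
  | zero => intro v hv; omega
  | succ n ih =>
    have h' : cond (edgeList m D crd (co (crd.get n)) (nbrs nb n)) (edgeCheck m D crd nb n) false
      = true := h
    cases ha : edgeList m D crd (co (crd.get n)) (nbrs nb n) with
    | false => rw [ha, cond_false] at h'; exact absurd h' (by decide)
    | true =>
      rw [ha, cond_true] at h'
      intro v hv
      rcases Nat.lt_succ_iff_lt_or_eq.mp hv with h2 | rfl
      · exact ih h' v h2
      · exact edgeList_sound ha

/-- The colouring of the vertices induced by a colouring of the plane. -/
noncomputable def vcol (f : ℂ → Fin 4) (m D : Nat) (crd : Tree) (v : Nat) : Fin 4 :=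
  f (pt m D (co (crd.get v)))

theorem goodM {f : ℂ → Fin 4} (hf : Proper f) {m D : Nat} (hD : 0 < D) {crd nb : Tree}
    (h : edgeCheck m D crd nb 1024 = true) :
    GoodM (vcol f m D crd) (fun v => maskOf (nbrs nb v)) := by
  intro v hv i hi
  obtain ⟨h1, h2⟩ := maskOf_testBit _ _ hi
  exact ⟨h1, hf _ _ (isUnit_norm hD (edgeCheck_sound h v hv _ h2))⟩

/-! ### Certificates -/

/-- Coordinates of the vertices of part A. -/
def crdA : Tree :=
  .node (.node (.node (.node (.node (.node (.leaf 0) (.leaf 2155905152))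
  (.node (.leaf 2155901040) (.leaf 2155909264)))
  (.node (.node (.leaf 2155909216) (.leaf 2155903112))
  (.node (.leaf 2155907192) (.leaf 2155901088))))
  (.node (.node (.node (.leaf 2155907160) (.leaf 2172746119))
  (.node (.leaf 2155774066) (.leaf 2155907224)))
  (.node (.node (.leaf 2155903080) (.leaf 2156036238))
  (.node (.leaf 2139064185) (.leaf 2155903144)))))
  (.node (.node (.node (.node (.leaf 2155905120) (.leaf 2155909248))
  (.node (.leaf 2155909232) (.leaf 2139326357)))
  (.node (.node (.leaf 2155642980) (.leaf 2155911304))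
  (.node (.leaf 2206165881) (.leaf 2173008291))))
  (.node (.node (.node (.leaf 2138802013) (.leaf 2105644423))
  (.node (.leaf 2155899000) (.leaf 2156167324)))
  (.node (.node (.leaf 2172483947) (.leaf 2155901072))
  (.node (.leaf 2155901056) (.leaf 0))))))
  (.node (.node (.node (.node (.node (.leaf 2155905184) (.leaf 2122354304))
  (.node (.leaf 2155905136) (.leaf 2172877205)))
  (.node (.node (.leaf 2189193828) (.leaf 2155907208))
  (.node (.leaf 2155911288) (.leaf 2155909280))))
  (.node (.node (.node (.leaf 2172352861) (.leaf 2139195271))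
  (.node (.leaf 2122223218) (.leaf 2189718172)))
  (.node (.node (.leaf 2155907176) (.leaf 2122485390))
  (.node (.leaf 2105513337) (.leaf 2155907240)))))
  (.node (.node (.node (.node (.leaf 2155903064) (.leaf 2206296967))
  (.node (.leaf 2189324914) (.leaf 2155903128)))
  (.node (.node (.leaf 2122092132) (.leaf 2189587086))
  (.node (.leaf 2172615033) (.leaf 2139457443))))
  (.node (.node (.node (.leaf 2155901024) (.leaf 2155899016))
  (.node (.leaf 2155903096) (.leaf 2122616476)))
  (.node (.node (.leaf 2138933099) (.leaf 2155905168))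
  (.node (.leaf 2189456000) (.leaf 0))))))

/-- Neighbours of the vertices of part A, as digits in base 1024. -/
def nbA : Tree :=
  .node (.node (.node (.node (.node (.node (.leaf 0) (.leaf 22092643162444613539916587002277935))
  (.node (.leaf 7894513911618590) (.leaf 37428539740217)))
  (.node (.node (.leaf 4) (.leaf 25321027976243))
  (.node (.leaf 14655409847568425) (.leaf 60))))
  (.node (.node (.node (.leaf 0) (.leaf 45133873))
  (.node (.leaf 11010164419612) (.leaf 44073804861)))
  (.node (.node (.leaf 3306067870743) (.leaf 38706137142))
  (.node (.leaf 16514171307045) (.leaf 0)))))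
  (.node (.node (.node (.node (.leaf 3382108517053457) (.leaf 20292613488814128))
  (.node (.leaf 9021515479671842) (.leaf 48375061563)))
  (.node (.node (.leaf 5504015285268) (.leaf 25))
  (.node (.leaf 0) (.leaf 53))))
  (.node (.node (.node (.leaf 11) (.leaf 29))
  (.node (.leaf 0) (.leaf 59451)))
  (.node (.node (.leaf 5507241758747) (.leaf 41921072184))
  (.node (.leaf 18038612502290478) (.leaf 0))))))
  (.node (.node (.node (.node (.node (.leaf 52973426605879357) (.leaf 23674715546621997))
  (.node (.leaf 13208122318880) (.leaf 47326300264506)))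
  (.node (.node (.leaf 5) (.leaf 26424835620916))
  (.node (.leaf 0) (.leaf 61))))
  (.node (.node (.node (.leaf 9) (.leaf 30821805241394))
  (.node (.leaf 11552797) (.leaf 58)))
  (.node (.node (.leaf 4406654289944) (.leaf 36323652061239))
  (.node (.leaf 38) (.leaf 0)))))
  (.node (.node (.node (.node (.leaf 0) (.leaf 26))
  (.node (.leaf 9678383135) (.leaf 49441464380)))
  (.node (.node (.leaf 6) (.leaf 38521609962549))
  (.node (.leaf 15413584886820) (.leaf 55))))
  (.node (.node (.node (.leaf 3) (.leaf 22))
  (.node (.leaf 13211337259048) (.leaf 59)))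
  (.node (.node (.leaf 6766406389486620) (.leaf 42992716852))
  (.node (.leaf 27954024491) (.leaf 0))))))

/-- Triangles with their centres. -/
def trisA : List (Nat × Nat × Nat × Nat) :=
  [(12, 17, 3, 16),
   (12, 23, 2, 7),
   (13, 18, 4, 17),
   (13, 24, 8, 2),
   (14, 20, 5, 19),
   (14, 27, 10, 9),
   (15, 21, 6, 20),
   (15, 28, 11, 10),
   (17, 24, 2, 23),
   (17, 32, 13, 12),
   (20, 28, 10, 27),
   (20, 32, 15, 14),
   (23, 32, 12, 30),
   (23, 40, 17, 16),
   (24, 34, 13, 32),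
   (24, 41, 18, 17),
   (27, 32, 14, 31),
   (27, 36, 20, 19),
   (30, 40, 16, 39),
   (30, 46, 23, 22),
   (31, 36, 19, 35),
   (31, 43, 27, 26),
   (33, 38, 21, 37),
   (33, 45, 29, 28),
   (34, 42, 18, 41),
   (34, 48, 25, 24),
   (37, 50, 33, 32),
   (40, 47, 23, 46),
   (40, 51, 32, 30),
   (41, 48, 24, 47),
   (41, 52, 34, 32),
   (44, 50, 32, 49),
   (47, 1, 41, 40),
   (47, 52, 32, 51),
   (49, 54, 36, 53),
   (49, 58, 44, 43),
   (50, 55, 37, 54),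
   (50, 59, 45, 44),
   (51, 1, 40, 56),
   (51, 60, 47, 46),
   (52, 57, 41, 1),
   (52, 61, 48, 47)]

/-- The refutation for part A: clauses with their derivations. -/
def prfA : List (Nat × Nat) :=
  [(470677686895047,
    13195783913587),
   (132615717515,
    1866210736300708448910439191871492),
   (8094221,
    125239282497744106099387192289489941626884),
   (69264949895,
    3214271515772844512404741103785375203974935996684449372774404),
   (69262606861,
    3214271515772935845148896450149595793248491798110947132907524),
   (862089598272142,
    2361473754950292471817),
   (3250358785590145,
    55617395294053786986332164),
   (69262557709,
    1396464665045330974952463386355033673703888505407702113268440176467781754196543127556),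
   (72483717774,
    19345193014063047136247817),
   (69264949902,
    2792928388596249152174396950632412462998129740426859726108171101611371501602529615876),
   (1152388857774721,
    118856904211293737347309101065),
   (175300739892,
    112163005145092),
   (140402246452,
    61662190403780925191110660),
   (1152390199362181,
    50588339929211),
   (1653798103859841,
    15287998379010386635425095079137574916),
   (70338658945,
    215706110613932943534302125866799818892345093750849437045970121596932),
   (100671865486,
    535283910511367099023381094979611531051524105),
   (1257944926831249,
    11693446110755130322807577867500364113164294979588),
   (177448272708,
    114360283815940),
   (140402508612,
    62870304683765294619967492),
   (1227133637182103,
    306282438505603239),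
   (78391722638,
    242115636036940004942478161480625741112456181610590896596922249489401943948582389225969518587492819062039166491281137668),
   (102282478209,
    1866210704561276919382819612934237),
   (102550913665,
    10942454557879477960672589616251042543576489646822061102388939757975078077947405083418628),
   (131005104779,
    2434187537397823309323340486811652),
   (4784651,
    170466878581530877162624753457209256532116046567268908615092965510429626117201924),
   (4227597,
    6026756329584999223760080295737609749682171670779959743537281),
   (752126625284621,
    122614987118654797628040270803830175446744921764902076458),
   (60671885837,
    67408302088499518180995344844163136728573503888761266779147257643017),
   (44832424461,
    14811374248372375728960373629167926234621690521538397348566147115),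
   (12539054989704495629,
    122614987666717911627295079476913913265146772297307602984),
   (765320766489101,
    1004461978965753132052162255261193069989439692685584119111720),
   (46711472653,
    24180693603548888738832424),
   (3703309,
    303580005976695651694902279711823547977209251032822419093079657092763779496917606409),
   (12322939414944809485,
    6646961604698549348255074737988837418),
   (22411350041231049284,
    12629217826772149767971936198103933007),
   (1649408380994274,
    431412016995979575914966511284420146915420646340285679352420533788676),
   (1869288693449403,
    468431818984628398),
   (140939330274,
    28951570383288457247720307450842551945071749092684991025098328174991745490948),
   (21546922807650009861,
    3542209546386888482890),
   (3338325354431444,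
    6936824814059373748228),
   (73287696775,
    234226767740297225),
   (1200745623896611,
    178279086821264411712089489417),
   (444251289796951,
    108099864772321367),
   (1275574427337463,
    57878779819221745304213004588261043555383114688098961001870213286062479174856134740609421018970364031210639851593732),
   (1200744550154787,
    612543980114612226),
   (3355918614283224,
    6936824816808152809476),
   (738957988905485,
    32408423188236901486728164277511816988668109931046750964039573785405559358729255061410839994530412993837283051637263489740304711742201731319502983722662656018251170960105966439595216816239148786598752231659608584822788),
   (738938930037198,
    1475921970064345923593),
   (12107114050319352333,
    5428430810279189635064551639205652607165520783828434911213478671225102950409),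
   (738957987185165,
    44469705197807121490398584136887941136561313224798243414675122506415034302734345),
   (77854884510,
    105280887189671824197691645240803789232562017135651269393714872297595114513663797413523608592511176548356),
   (1275537113399959,
    1379373485592305586029383491076105),
   (77854884603,
    588550513186713952302687994573617906781734934293490180100),
   (1719783837778694,
    432398627274555491),
   (4751885,
    125997288035466667874782567332552372725423279855958459527782509035259741222281220),
   (5259789,
    364295820231151029128750508601842750848476593105342237323545745047764024697197436937),
   (4047373,
    134816398438412151908204622517924799439618056186575195505314696257545),
   (525,
    24447479065442482431181289499552695200879293950341915644668845340524917293263218154870415369),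
   (56107581953,
    178285278655639096159837413385),
   (1271142287426082,
    97789727215786678793634464371900581258878005674729622318700335123811218089351603728702054404),
   (77584368129,
    416890056137700849566190427443089981269246346902379429897),
   (56914723329,
    38690367054444362224918537),
   (1165558300689035,
    288265843254436002),
   (75973542407,
    89640588360411665669443380644139502403345527287383786000597563029255803261397626937187311620),
   (1666990634910456,
    1866210755341363890290456307417092),
   (53424964103,
    118585689726410705161490581015819334370246091315025349088681544536781350119038985),
   (106040508974,
    15952693660047335244122885758483447812),
   (1257920765395463,
    758318595389004484621576786864239864931975177),
   (6521345,
    39587284050016),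
   (4850183,
    416890044993366242394272391747401541632080625647383240713),
   (6078987,
    4620514036802104957568755258610364116593759285066860979101700),
   (1227132560949774,
    6582847315526366872172950129027621638420936886676863501141073929),
   (77584351758,
    441767405230424036709526020073606831626518875060736326719160983111868425),
   (1244746490085902,
    118856906055688938583663099913),
   (99327443470,
    7976351946427583215681062334968627209),
   (2124429080937211,
    6789325124129875542020),
   (309342388638125255049970,
    455623896443903921196275597316),
   (1737404746334987,
    515032931580282570263459807236),
   (246323358122267,
    442778197296471883785),
   (1244752129835675,
    1379373493755616924400053119401993),
   (1719745181745927,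
    432398628013015235),
   (2590634358719249,
    1605850373894607647972701106164169135499649028),
   (2564249300779793,
    1605850374393068146391742400844176619501412356),
   (2564246079554321,
    107766794390643865378241407891562690993205232870252548),
   (2573042709611281,
    1605850374393068146392649021408401045539143684),
   (2573042709644049,
    107763884769457),
   (141208371985,
    318698847914605641594392453643567133110478219973209634191865003468250657200275460),
   (141208339217,
    59245421778719117713793526218371412807920138051048596991053398020),
   (1130400233669134,
    73569140394448554254309160706941040496538276052767318025),
   (2661010082382625,
    1650457311468076760387488095330619681070555140),
   (56107483531,
    37387087134729),
   (2423500538938113,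
    7674714834405757640708),
   (2405908352893697,
    515041394024029525238578413572),
   (2634622340186913,
    1650457312464997757227081768155658093549772804),
   (2652214526231329,
    1962705857367657566567488990605448295235108868),
   (2652212378747681,
    110760315331169411849403686229944403103130785223458820),
   (68994236942,
    331325990701634899236648944599518996877122547135488171911468162808283145),
   (2313534074798881,
    666614383657533568),
   (2634619118961441,
    110760315375770902246505499807800990100628695883636740),
   (74898227726,
    18744004499679406391045003668498393919145527886830162400159777858368821104784814762852156079662834812650178720679215063308253878910660941667315590251285560939727554564536349564932),
   (4735502,
    691531707913709836849059002294641365170136088570250077627580307124436264846460083598778784336565453338156743567915770898761150159714787551519938346891705112603194964626961391244296678785169668251652),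
   (2313534880105249,
    907348503649659083537219060248785445929148177245554081796),
   (75975852674,
    215706114982973520474815744054830657849250705046135487858718898962441),
   (8618626,
    7958151000155502670001492950961092580868724869732030860879487605107699433816458861215753),
   (8618785,
    1942906961217613495841569078169440740688139249887915784969693525817230381759617589376),
   (123220492887,
    3092361569895041139383124897648387961989550736305633602151859966054686834),
   (8618583,
    1275033056209958367021900472905101495192795264048303428620276899941592848803625623680),
   (7553550,
    1700043751919778164608857198462496234221168578515655179279976235816484668091778728049),
   (8618519,
    25332625990690157014014179072361971999259579420790989699549228638054267281536),
   (8618715,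
    1427422633402093549992527555978479192598036608),
   (141206962903,
    2319271619239354941978727397275932507608951874676798400045007341947625600),
   (8618711,
    10445070803882672653855196056057511917003405473167734681128134379633396595196760696479872),
   (526,
    52662600025180960189372694022522934667623945785133869179672256640),
   (398,
    52783034499168),
   (520,
    549495212516494143036727341528930325504319729730189706874944479921515402538815196734737377945646267265565291279405599946549289120488039267394723844),
   (296,
    1460513006373772934626227793170489),
   (283,
    294275440423127438653672234091367882943976020269286866953),
   (199,
    65342273928265672021802083304144641200187),
   (0,
    994775759793367834438262666740922171844951500121680153790785234566113031787872610910217)]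

/-- Coordinates of the vertices of part B. -/
def crdB : Tree :=
  .node (.node (.node (.node (.node (.node (.node (.node (.node (.node (.leaf 0) (.leaf 2155773050))
  (.node (.leaf 2139193725) (.leaf 2172618635)))
  (.node (.node (.leaf 2156034174) (.leaf 2172747147))
  (.node (.leaf 2139193745) (.leaf 2156167794))))
  (.node (.node (.node (.leaf 2172747135) (.leaf 2138932087))
  (.node (.leaf 2172616065) (.leaf 2189327492)))
  (.node (.node (.leaf 2189460602) (.leaf 2155902586))
  (.node (.leaf 2139194235) (.leaf 2172618129)))))
  (.node (.node (.node (.node (.leaf 2139322755) (.leaf 2105246599))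
  (.node (.leaf 2189721208) (.leaf 2173010307)))
  (.node (.node (.leaf 2189199996) (.leaf 2121958022))
  (.node (.leaf 2122089108) (.leaf 2139064177))))
  (.node (.node (.node (.leaf 2138802049) (.leaf 2172619647))
  (.node (.leaf 2139194757) (.leaf 2172487055)))
  (.node (.node (.leaf 2172877169) (.leaf 2138931063))
  (.node (.leaf 2155643510) (.leaf 2155905128))))))
  (.node (.node (.node (.node (.node (.leaf 2139062663) (.leaf 2105639813))
  (.node (.leaf 2206172025) (.leaf 2156037262)))
  (.node (.node (.leaf 2155905144) (.leaf 2172619635))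
  (.node (.leaf 2155773560) (.leaf 2138931569))))
  (.node (.node (.node (.leaf 2155775612) (.leaf 2156036238))
  (.node (.leaf 2105639303) (.leaf 2122221688)))
  (.node (.node (.leaf 2139193741) (.leaf 2155907212))
  (.node (.leaf 2156167300) (.leaf 2189460108)))))
  (.node (.node (.node (.node (.leaf 2172356475) (.leaf 2172224895))
  (.node (.leaf 2155905654) (.leaf 2139194227)))
  (.node (.node (.leaf 2139192191) (.leaf 2139062133))
  (.node (.leaf 2122612874) (.leaf 2155774102))))
  (.node (.node (.node (.leaf 2155904646) (.leaf 2122219644))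
  (.node (.leaf 2155903622) (.leaf 2156168312)))
  (.node (.node (.leaf 2156166782) (.leaf 2172747661))
  (.node (.leaf 2206041469) (.leaf 0)))))))
  (.node (.node (.node (.node (.node (.node (.leaf 2138932613) (.leaf 2172485489))
  (.node (.leaf 2122482314) (.leaf 2189589640)))
  (.node (.node (.leaf 2139192203) (.leaf 2122613384))
  (.node (.leaf 2139192697) (.leaf 2105379709))))
  (.node (.node (.node (.leaf 2172486525) (.leaf 2172878217))
  (.node (.leaf 2189590122) (.leaf 2138930063)))
  (.node (.node (.leaf 2139064197) (.leaf 2206172033))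
  (.node (.leaf 2156037250) (.leaf 2138929533)))))
  (.node (.node (.node (.node (.leaf 2189590134) (.leaf 2156296820))
  (.node (.leaf 2155644534) (.leaf 2172355981)))
  (.node (.node (.leaf 2105377167) (.leaf 2155906160))
  (.node (.leaf 2206301051) (.leaf 2189722244))))
  (.node (.node (.node (.leaf 2155904634) (.leaf 2155512448))
  (.node (.leaf 2139324285) (.leaf 2189592688)))
  (.node (.node (.leaf 2189719678) (.leaf 2172615045))
  (.node (.leaf 2122482824) (.leaf 2155643028))))))
  (.node (.node (.node (.node (.node (.leaf 2139062659) (.leaf 2189198466))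
  (.node (.leaf 2172876675) (.leaf 2206304629)))
  (.node (.node (.leaf 2156165240) (.leaf 2156033142))
  (.node (.leaf 2172357511) (.leaf 2122087554))))
  (.node (.node (.node (.leaf 2172618109) (.leaf 2122088578))
  (.node (.leaf 2139324807) (.leaf 2206432643)))
  (.node (.node (.leaf 2206432631) (.leaf 2138931573))
  (.node (.leaf 2189590146) (.leaf 2122222198)))))
  (.node (.node (.node (.node (.leaf 2172616571) (.leaf 2122220668))
  (.node (.leaf 2172747653) (.leaf 2156038274)))
  (.node (.node (.leaf 2139061639) (.leaf 2155772548))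
  (.node (.leaf 2138801037) (.leaf 2105770365))))
  (.node (.node (.node (.leaf 2172617089) (.leaf 2139063157))
  (.node (.leaf 2139064711) (.leaf 2105640319)))
  (.node (.node (.leaf 2155775114) (.leaf 2138800001))
  (.node (.leaf 2189591664) (.leaf 0))))))))
  (.node (.node (.node (.node (.node (.node (.node (.leaf 2155903610) (.leaf 2172617097))
  (.node (.leaf 2172748163) (.leaf 2122220664)))
  (.node (.node (.leaf 2122480772) (.leaf 2189722232))
  (.node (.leaf 2172487047) (.leaf 2155642510))))
  (.node (.node (.node (.leaf 2172618105) (.leaf 2122352256))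
  (.node (.leaf 2172486003) (.leaf 2122348160)))
  (.node (.node (.leaf 2138932605) (.leaf 2189196924))
  (.node (.leaf 2172748167) (.leaf 2122351220)))))
  (.node (.node (.node (.node (.leaf 2189459060) (.leaf 2105379203))
  (.node (.leaf 2139323791) (.leaf 2155512436)))
  (.node (.node (.leaf 2173008243) (.leaf 2172747625))
  (.node (.leaf 2122481792) (.leaf 2122088060))))
  (.node (.node (.node (.leaf 2206301557) (.leaf 2156034672))
  (.node (.leaf 2139324803) (.leaf 2155902080)))
  (.node (.node (.leaf 2139322767) (.leaf 2122349690))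
  (.node (.leaf 2189327480) (.leaf 2121958010))))))
  (.node (.node (.node (.node (.node (.leaf 2139063173) (.leaf 2172487561))
  (.node (.leaf 2139454335) (.leaf 2189198984)))
  (.node (.node (.leaf 2155906180) (.leaf 2139065229))
  (.node (.leaf 2172488561) (.leaf 2122352762))))
  (.node (.node (.node (.leaf 2139062667) (.leaf 2172749685))
  (.node (.leaf 2189198462) (.leaf 2105769341)))
  (.node (.node (.leaf 2172355957) (.leaf 2105639809))
  (.node (.leaf 2122481278) (.leaf 2156168834)))))
  (.node (.node (.node (.node (.leaf 2189589616) (.leaf 2172615033))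
  (.node (.leaf 2172618097) (.leaf 2155641980)))
  (.node (.node (.leaf 2156035720) (.leaf 2138930557))
  (.node (.leaf 2189459586) (.leaf 2172619659))))
  (.node (.node (.node (.leaf 2139062655) (.leaf 2172615041))
  (.node (.leaf 2172619129) (.leaf 2122483326)))
  (.node (.node (.leaf 2139191681) (.leaf 2172354431))
  (.node (.leaf 2155512966) (.leaf 0)))))))
  (.node (.node (.node (.node (.node (.node (.leaf 2155775106) (.leaf 2189457530))
  (.node (.leaf 2189589118) (.leaf 2155773042)))
  (.node (.node (.leaf 2155644036) (.leaf 2105637761))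
  (.node (.leaf 2139061121) (.leaf 2206041477))))
  (.node (.node (.node (.leaf 2122350726) (.leaf 2172879735))
  (.node (.leaf 2155776644) (.leaf 2155642992)))
  (.node (.node (.leaf 2155775624) (.leaf 2139455877))
  (.node (.leaf 2156167292) (.leaf 2189591688)))))
  (.node (.node (.node (.node (.leaf 2139323273) (.leaf 2206039409))
  (.node (.leaf 2155904120) (.leaf 2206041987)))
  (.node (.node (.leaf 2105507217) (.leaf 2172615559))
  (.node (.leaf 2139064715) (.leaf 2105639291))))
  (.node (.node (.node (.leaf 2155904128) (.leaf 2155642494))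
  (.node (.leaf 2122351232) (.leaf 2138930043)))
  (.node (.node (.leaf 2122219652) (.leaf 2155772552))
  (.node (.leaf 2122479234) (.leaf 0))))))
  (.node (.node (.node (.node (.node (.leaf 2172487549) (.leaf 2122351742))
  (.node (.leaf 2105508743) (.leaf 2155777138)))
  (.node (.node (.leaf 2155645064) (.leaf 2122742912))
  (.node (.leaf 2088795276) (.leaf 2138929545))))
  (.node (.node (.node (.leaf 2156035194) (.leaf 2206302079))
  (.node (.leaf 2172749179) (.leaf 2156298374)))
  (.node (.node (.leaf 2105769353) (.leaf 2138930051))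
  (.node (.leaf 2139064703) (.leaf 2122484362)))))
  (.node (.node (.node (.node (.leaf 2156035708) (.leaf 2139195271))
  (.node (.leaf 2155773572) (.leaf 2172616077)))
  (.node (.node (.leaf 2172878711) (.leaf 2189326970))
  (.node (.leaf 2189199490) (.leaf 2155772560))))
  (.node (.node (.node (.leaf 2189328504) (.leaf 2122482302))
  (.node (.leaf 2189197948) (.leaf 2189326460)))
  (.node (.node (.leaf 2189329022) (.leaf 2139191669))
  (.node (.leaf 2105247109) (.leaf 0)))))))))
  (.node (.node (.node (.node (.node (.node (.node (.node (.leaf 2155905164) (.leaf 2155773062))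
  (.node (.leaf 2156036736) (.leaf 2155642486)))
  (.node (.node (.leaf 2156034178) (.leaf 2139454841))
  (.node (.leaf 2155776138) (.leaf 2189721224))))
  (.node (.node (.node (.leaf 2139192705) (.leaf 2122349184))
  (.node (.leaf 2138933115) (.leaf 2172484465)))
  (.node (.node (.leaf 2172618619) (.leaf 2172354427))
  (.node (.leaf 2172748677) (.leaf 2189328010)))))
  (.node (.node (.node (.node (.leaf 2122480776) (.leaf 2206431101))
  (.node (.leaf 2122089096) (.leaf 2189722738)))
  (.node (.node (.leaf 2189329516) (.leaf 2155777162))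
  (.node (.leaf 2122219648) (.leaf 2139196291))))
  (.node (.node (.node (.leaf 2189459566) (.leaf 2139065217))
  (.node (.leaf 2172879229) (.leaf 2155903634)))
  (.node (.node (.leaf 2206170483) (.leaf 2155772536))
  (.node (.leaf 2155643530) (.leaf 2155902068))))))
  (.node (.node (.node (.node (.node (.leaf 2172617595) (.leaf 2122352774))
  (.node (.leaf 2139322237) (.leaf 2206304123)))
  (.node (.node (.leaf 2155906172) (.leaf 2105510277))
  (.node (.leaf 2155773576) (.leaf 2172880759))))
  (.node (.node (.node (.leaf 2155775620) (.leaf 2172619141))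
  (.node (.leaf 2139191693) (.leaf 2156298362)))
  (.node (.node (.leaf 2138931585) (.leaf 2155905646))
  (.node (.leaf 2155906188) (.leaf 2156168830)))))
  (.node (.node (.node (.node (.leaf 2155645570) (.leaf 2155643000))
  (.node (.leaf 2155905674) (.leaf 2122219640)))
  (.node (.node (.leaf 2172746625) (.leaf 2155772540))
  (.node (.leaf 2138931071) (.leaf 2189066368))))
  (.node (.node (.node (.leaf 2172616575) (.leaf 2139060607))
  (.node (.leaf 2156036234) (.leaf 2156168328)))
  (.node (.node (.leaf 2172746111) (.leaf 2156036720))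
  (.node (.leaf 2156033154) (.leaf 0)))))))
  (.node (.node (.node (.node (.node (.node (.leaf 2155775102) (.leaf 2139322743))
  (.node (.leaf 2155644024) (.leaf 2156167818)))
  (.node (.node (.leaf 2155644028) (.leaf 2189592182))
  (.node (.leaf 2172615551) (.leaf 2172224907))))
  (.node (.node (.node (.leaf 2138932099) (.leaf 2155774066))
  (.node (.leaf 2122220182) (.leaf 2155903598)))
  (.node (.node (.leaf 2122351750) (.leaf 2122613380))
  (.node (.leaf 2155906164) (.leaf 2172483971)))))
  (.node (.node (.node (.node (.leaf 2172877687) (.leaf 2155513484))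
  (.node (.leaf 2122349196) (.leaf 2105378685)))
  (.node (.node (.leaf 2206303087) (.leaf 2139061113))
  (.node (.leaf 2172355973) (.leaf 2155772022))))
  (.node (.node (.node (.leaf 2155774078) (.leaf 2105377155))
  (.node (.leaf 2122350208) (.leaf 2189331588)))
  (.node (.node (.leaf 2189328508) (.leaf 2189458566))
  (.node (.leaf 2172618093) (.leaf 0))))))
  (.node (.node (.node (.node (.node (.leaf 2189329528) (.leaf 2172486023))
  (.node (.leaf 2122221700) (.leaf 2189200008)))
  (.node (.node (.leaf 2189198972) (.leaf 2138934135))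
  (.node (.leaf 2189067380) (.leaf 2189457542))))
  (.node (.node (.node (.leaf 2139063683) (.leaf 2139060619))
  (.node (.leaf 2139192187) (.leaf 2105770883)))
  (.node (.node (.leaf 2156296832) (.leaf 2172484477))
  (.node (.leaf 2122482306) (.leaf 2122217098)))))
  (.node (.node (.node (.node (.leaf 2139062149) (.leaf 2189329540))
  (.node (.leaf 2155773564) (.leaf 2172615563)))
  (.node (.node (.leaf 2172616563) (.leaf 2172616587))
  (.node (.leaf 2206173049) (.leaf 2206039939))))
  (.node (.node (.node (.leaf 2172746613) (.leaf 2156037238))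
  (.node (.leaf 2206302075) (.leaf 2206303617)))
  (.node (.node (.leaf 2139194251) (.leaf 2139060101))
  (.node (.leaf 2155644558) (.leaf 0))))))))
  (.node (.node (.node (.node (.node (.node (.node (.leaf 2189459574) (.leaf 2172354937))
  (.node (.leaf 2189591158) (.leaf 2172750207)))
  (.node (.node (.leaf 2122219656) (.leaf 2189330564))
  (.node (.leaf 2172879221) (.leaf 2172483963))))
  (.node (.node (.node (.leaf 2139063687) (.leaf 2122218628))
  (.node (.leaf 2189331058) (.leaf 2122353280)))
  (.node (.node (.leaf 2172487043) (.leaf 2105508735))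
  (.node (.leaf 2156037246) (.leaf 2139325815)))))
  (.node (.node (.node (.node (.leaf 2122350220) (.leaf 2172487019))
  (.node (.leaf 2189458036) (.leaf 2105636737)))
  (.node (.node (.leaf 2138802061) (.leaf 2155907714))
  (.node (.leaf 2172745589) (.leaf 2139456383))))
  (.node (.node (.node (.leaf 2122611850) (.leaf 2206040445))
  (.node (.leaf 2155774070) (.leaf 2156037748)))
  (.node (.node (.leaf 2122349714) (.leaf 2139060603))
  (.node (.leaf 2189330050) (.leaf 2088797312))))))
  (.node (.node (.node (.node (.node (.leaf 2156035712) (.leaf 2139324815))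
  (.node (.leaf 2173008769) (.leaf 2138800531)))
  (.node (.node (.leaf 2138801543) (.leaf 2189196912))
  (.node (.leaf 2205909877) (.leaf 2189196414))))
  (.node (.node (.node (.leaf 2172748151) (.leaf 2139455359))
  (.node (.leaf 2122089602) (.leaf 2206434173)))
  (.node (.node (.leaf 2139321731) (.leaf 2155905682))
  (.node (.leaf 2189591166) (.leaf 2156038784)))))
  (.node (.node (.node (.node (.leaf 2206171507) (.leaf 2172749689))
  (.node (.leaf 2139193211) (.leaf 2156038270)))
  (.node (.node (.leaf 2172616057) (.leaf 2172484995))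
  (.node (.leaf 2206303605) (.leaf 2139059595))))
  (.node (.node (.node (.leaf 2139062145) (.leaf 2189328516))
  (.node (.leaf 2138801025) (.leaf 2122480246)))
  (.node (.node (.leaf 2156166786) (.leaf 2105639295))
  (.node (.leaf 2105770377) (.leaf 0)))))))
  (.node (.node (.node (.node (.node (.node (.leaf 2172617081) (.leaf 2206303099))
  (.node (.leaf 2122480258) (.leaf 2122483330)))
  (.node (.node (.leaf 2172617587) (.leaf 2122218122))
  (.node (.leaf 2172747143) (.leaf 2172354439))))
  (.node (.node (.node (.leaf 2172617077) (.leaf 2139325321))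
  (.node (.leaf 2206171001) (.leaf 2138932593)))
  (.node (.node (.leaf 2138931593) (.leaf 2155907718))
  (.node (.leaf 2155907200) (.leaf 2172880265)))))
  (.node (.node (.node (.node (.leaf 2122481290) (.leaf 2105376143))
  (.node (.leaf 2155906184) (.leaf 2156034708)))
  (.node (.node (.leaf 2156035704) (.leaf 2122350714))
  (.node (.leaf 2189197430) (.leaf 2172617105))))
  (.node (.node (.node (.leaf 2155774082) (.leaf 2155642498))
  (.node (.leaf 2172878723) (.leaf 2189590154)))
  (.node (.node (.leaf 2156035190) (.leaf 2172485513))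
  (.node (.leaf 2206039927) (.leaf 0))))))
  (.node (.node (.node (.node (.node (.leaf 2155644542) (.leaf 2172875651))
  (.node (.leaf 2172486513) (.leaf 2155907702)))
  (.node (.node (.leaf 2206302581) (.leaf 2189067392))
  (.node (.leaf 2121958540) (.leaf 2172878735))))
  (.node (.node (.node (.leaf 2155775110) (.leaf 2105638785))
  (.node (.leaf 2172746629) (.leaf 2122483848)))
  (.node (.node (.leaf 2189458542) (.leaf 2139193203))
  (.node (.leaf 2172619137) (.leaf 2121956998)))))
  (.node (.node (.node (.node (.leaf 2156035716) (.leaf 2156167304))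
  (.node (.leaf 2139061631) (.leaf 2122218620)))
  (.node (.node (.leaf 2155775608) (.leaf 2155903092))
  (.node (.leaf 2139193721) (.leaf 2139059583))))
  (.node (.node (.node (.leaf 2189589628) (.leaf 2189591170))
  (.node (.leaf 2105508229) (.leaf 2122217604)))
  (.node (.node (.leaf 2122220162) (.leaf 2189197442))
  (.node (.leaf 2139194749) (.leaf 0))))))))))
  (.node (.node (.node (.node (.node (.node (.node (.node (.node (.leaf 2155905152) (.leaf 2156037242))
  (.node (.leaf 2155773568) (.leaf 2139063667)))
  (.node (.node (.leaf 2155776126) (.leaf 2172617611))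
  (.node (.leaf 2156034166) (.leaf 2122089080))))
  (.node (.node (.node (.leaf 2172617599) (.leaf 2189591676))
  (.node (.leaf 2172748673) (.leaf 2189591684)))
  (.node (.node (.leaf 2172746107) (.leaf 2155907706))
  (.node (.leaf 2172616069) (.leaf 2122482294)))))
  (.node (.node (.node (.node (.leaf 2138933123) (.leaf 2222883448))
  (.node (.leaf 2189197944) (.leaf 2172615021)))
  (.node (.node (.leaf 2122091140) (.leaf 2172488585))
  (.node (.leaf 2155643008) (.leaf 2172618639))))
  (.node (.node (.node (.leaf 2138933641) (.leaf 2139190657))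
  (.node (.leaf 2172485501) (.leaf 2156167312)))
  (.node (.node (.leaf 2172487537) (.leaf 2139324791))
  (.node (.leaf 2156166794) (.leaf 2156167276))))))
  (.node (.node (.node (.node (.node (.leaf 2172747131) (.leaf 2122348678))
  (.node (.leaf 2189588604) (.leaf 2173010291)))
  (.node (.node (.leaf 2155904124) (.leaf 2189462132))
  (.node (.leaf 2156036728) (.leaf 2172483959))))
  (.node (.node (.node (.leaf 2156034692) (.leaf 2139191163))
  (.node (.leaf 2172618611) (.leaf 2155511930)))
  (.node (.node (.leaf 2172878719) (.leaf 2155904622))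
  (.node (.leaf 2155904140) (.leaf 2155641470)))))
  (.node (.node (.node (.node (.leaf 2138802053) (.leaf 2206304111))
  (.node (.leaf 2155906686) (.leaf 2139194741)))
  (.node (.node (.leaf 2139063679) (.leaf 2139193717))
  (.node (.leaf 2139193235) (.leaf 2139190645))))
  (.node (.node (.node (.leaf 2155905670) (.leaf 2122481788))
  (.node (.leaf 2155774090) (.leaf 2155641992)))
  (.node (.node (.leaf 2155643518) (.leaf 2172617101))
  (.node (.leaf 2155777150) (.leaf 0)))))))
  (.node (.node (.node (.node (.node (.node (.leaf 2156035198) (.leaf 2172879217))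
  (.node (.leaf 2156166264) (.leaf 2189329544)))
  (.node (.node (.leaf 2139063691) (.leaf 2156166770))
  (.node (.leaf 2139063161) (.leaf 2222884990))))
  (.node (.node (.node (.leaf 2139323779) (.leaf 2172486537))
  (.node (.leaf 2155646088) (.leaf 2139325839)))
  (.node (.node (.leaf 2122349702) (.leaf 2189721220))
  (.node (.leaf 2155904116) (.leaf 2139326333)))))
  (.node (.node (.node (.node (.leaf 2189329014) (.leaf 2155513460))
  (.node (.leaf 2156165770) (.leaf 2122087566)))
  (.node (.node (.leaf 2122480788) (.leaf 2155906674))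
  (.node (.leaf 2138801531) (.leaf 2172750215))))
  (.node (.node (.node (.leaf 2155905658) (.leaf 2105769859))
  (.node (.leaf 2138931581) (.leaf 2205908857)))
  (.node (.node (.leaf 2122090626) (.leaf 2172749701))
  (.node (.leaf 2156035214) (.leaf 2155905176))))))
  (.node (.node (.node (.node (.node (.leaf 2189589624) (.leaf 2172354941))
  (.node (.leaf 2172488067) (.leaf 2122610296)))
  (.node (.node (.leaf 2189330552) (.leaf 2139321719))
  (.node (.leaf 2189459048) (.leaf 2206172037))))
  (.node (.node (.node (.leaf 2139192195) (.leaf 2122612866))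
  (.node (.leaf 2172615547) (.leaf 2206040963)))
  (.node (.node (.leaf 2206040951) (.leaf 2138669963))
  (.node (.leaf 2189329026) (.leaf 2189593206)))))
  (.node (.node (.node (.node (.leaf 2172748155) (.leaf 2189589636))
  (.node (.leaf 2172617093) (.leaf 2156168324)))
  (.node (.node (.leaf 2139194247) (.leaf 2156037764))
  (.node (.leaf 2122088590) (.leaf 2155511424))))
  (.node (.node (.node (.leaf 2139193729) (.leaf 2155773046))
  (.node (.leaf 2172748143) (.leaf 2206169985)))
  (.node (.node (.leaf 2139061643) (.leaf 2206302593))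
  (.node (.leaf 2156165746) (.leaf 0))))))))
  (.node (.node (.node (.node (.node (.node (.node (.leaf 2155906694) (.leaf 2173009785))
  (.node (.leaf 2189327990) (.leaf 2172614527)))
  (.node (.node (.leaf 2122220676) (.leaf 2122221692))
  (.node (.leaf 2172485493) (.leaf 2122352248))))
  (.node (.node (.node (.leaf 2139192199) (.leaf 2189461120))
  (.node (.leaf 2189461112) (.leaf 2189457024)))
  (.node (.node (.leaf 2172877699) (.leaf 2122089084))
  (.node (.leaf 2155773054) (.leaf 2138930039)))))
  (.node (.node (.node (.node (.leaf 2189460084) (.leaf 2088926856))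
  (.node (.leaf 2138932111) (.leaf 2206173567)))
  (.node (.node (.leaf 2206041975) (.leaf 2139062679))
  (.node (.leaf 2189590656) (.leaf 2122613372))))
  (.node (.node (.node (.leaf 2189198454) (.leaf 2206433149))
  (.node (.leaf 2155905140) (.leaf 2155908224)))
  (.node (.node (.leaf 2138933135) (.leaf 2122351738))
  (.node (.leaf 2122221182) (.leaf 2088795264))))))
  (.node (.node (.node (.node (.node (.leaf 2172617085) (.leaf 2138931087))
  (.node (.leaf 2138801535) (.leaf 2173009773)))
  (.node (.node (.leaf 2155905160) (.leaf 2172878699))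
  (.node (.leaf 2206173555) (.leaf 2105638267))))
  (.node (.node (.node (.leaf 2172616567) (.leaf 2189721726))
  (.node (.leaf 2122611842) (.leaf 2105377661)))
  (.node (.node (.leaf 2172488573) (.leaf 2155904658))
  (.node (.leaf 2122220158) (.leaf 2206300549)))))
  (.node (.node (.node (.node (.leaf 2206302067) (.leaf 2139064185))
  (.node (.leaf 2155645558) (.leaf 2155772030)))
  (.node (.node (.leaf 2155774600) (.leaf 2139325309))
  (.node (.leaf 2172356487) (.leaf 2172750709))))
  (.node (.node (.node (.leaf 2172748159) (.leaf 2172749697))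
  (.node (.leaf 2172355455) (.leaf 2189592194)))
  (.node (.node (.leaf 2139064193) (.leaf 2105507711))
  (.node (.leaf 2105376649) (.leaf 0)))))))
  (.node (.node (.node (.node (.node (.node (.leaf 2172747641) (.leaf 2189461626))
  (.node (.leaf 2189330046) (.leaf 2189326974)))
  (.node (.node (.leaf 2172747123) (.leaf 2105509249))
  (.node (.leaf 2139194753) (.leaf 2139455865))))
  (.node (.node (.node (.leaf 2172747637) (.leaf 2138930569))
  (.node (.leaf 2139454853) (.leaf 2139323249)))
  (.node (.node (.leaf 2139324297) (.leaf 2155902598))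
  (.node (.leaf 2155903104) (.leaf 2172484489)))))
  (.node (.node (.node (.node (.leaf 2138932617) (.leaf 2206434161))
  (.node (.leaf 2155904136) (.leaf 2155775596)))
  (.node (.node (.leaf 2155646076) (.leaf 2172749191))
  (.node (.leaf 2172617069) (.leaf 2139193199))))
  (.node (.node (.node (.leaf 2155906176) (.leaf 2156167806))
  (.node (.leaf 2189460096) (.leaf 2122481270)))
  (.node (.node (.leaf 2172748661) (.leaf 2156037768))
  (.node (.leaf 2172746095) (.leaf 0))))))
  (.node (.node (.node (.node (.node (.leaf 2156165758) (.leaf 2138934653))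
  (.node (.leaf 2172878193) (.leaf 2139065739)))
  (.node (.node (.leaf 2122219664) (.leaf 2121958528))
  (.node (.leaf 2122742924) (.leaf 2139326345))))
  (.node (.node (.node (.leaf 2155775098) (.leaf 2206171519))
  (.node (.leaf 2139061125) (.leaf 2189588616)))
  (.node (.node (.leaf 2105377673) (.leaf 2139325827))
  (.node (.leaf 2172745601) (.leaf 2189065850)))))
  (.node (.node (.node (.node (.leaf 2155774588) (.leaf 2155643016))
  (.node (.leaf 2156036740) (.leaf 2172748685)))
  (.node (.node (.leaf 2172486007) (.leaf 2139065213))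
  (.node (.leaf 2139062137) (.leaf 2139192175))))
  (.node (.node (.node (.leaf 2189590648) (.leaf 2189328002))
  (.node (.leaf 2122612356) (.leaf 2189592700)))
  (.node (.node (.leaf 2122481282) (.leaf 2122612862))
  (.node (.leaf 2139061117) (.leaf 0)))))))))
  (.node (.node (.node (.node (.node (.node (.node (.node (.leaf 2155906682) (.leaf 2172747657))
  (.node (.leaf 2172616579) (.leaf 2156167798)))
  (.node (.node (.leaf 2155776130) (.leaf 2172355463))
  (.node (.leaf 2139064707) (.leaf 2189197960))))
  (.node (.node (.node (.leaf 2139063169) (.leaf 2189458048))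
  (.node (.leaf 2172487557) (.leaf 2172880241)))
  (.node (.node (.leaf 2139323261) (.leaf 2138800507))
  (.node (.leaf 2172616583) (.leaf 2122350196)))))
  (.node (.node (.node (.node (.leaf 2122220680) (.leaf 2206042493))
  (.node (.leaf 2122482318) (.leaf 2139454323)))
  (.node (.node (.leaf 2206040433) (.leaf 2138931605))
  (.node (.leaf 2189328512) (.leaf 2139195769))))
  (.node (.node (.node (.leaf 2122350738) (.leaf 2139061137))
  (.node (.leaf 2138931075) (.leaf 2155906706)))
  (.node (.node (.leaf 2105639821) (.leaf 2156037752))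
  (.node (.leaf 2155775090) (.leaf 2155908212))))))
  (.node (.node (.node (.node (.node (.leaf 2139192709) (.leaf 2172877193))
  (.node (.leaf 2138933629) (.leaf 2105640837)))
  (.node (.node (.leaf 2155904132) (.leaf 2122348172))
  (.node (.leaf 2156036744) (.leaf 2122348666))))
  (.node (.node (.node (.leaf 2139193227) (.leaf 2156035696))
  (.node (.leaf 2189720702) (.leaf 2206039421)))
  (.node (.node (.leaf 2122350722) (.leaf 2206170495))
  (.node (.leaf 2189327998) (.leaf 2155641474)))))
  (.node (.node (.node (.node (.leaf 2122090120) (.leaf 2156167288))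
  (.node (.leaf 2155776640) (.leaf 2122481784)))
  (.node (.node (.leaf 2172618113) (.leaf 2156037756))
  (.node (.leaf 2172485505) (.leaf 2088796288))))
  (.node (.node (.node (.leaf 2139193215) (.leaf 2139195263))
  (.node (.leaf 2122091136) (.leaf 2122218110)))
  (.node (.node (.leaf 2172618623) (.leaf 2172750203))
  (.node (.leaf 2105378179) (.leaf 0)))))))
  (.node (.node (.node (.node (.node (.node (.leaf 2156035202) (.leaf 2138933111))
  (.node (.leaf 2155644040) (.leaf 2172746637)))
  (.node (.node (.leaf 2156166276) (.leaf 2206172543))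
  (.node (.leaf 2172749183) (.leaf 2105378171))))
  (.node (.node (.node (.leaf 2189459578) (.leaf 2172484983))
  (.node (.leaf 2172355451) (.leaf 2155906670)))
  (.node (.node (.leaf 2156034696) (.leaf 2138800005))
  (.node (.leaf 2155643004) (.leaf 2172880771)))))
  (.node (.node (.node (.node (.leaf 2172487031) (.leaf 2122352786))
  (.node (.leaf 2122352268) (.leaf 2206431619)))
  (.node (.node (.leaf 2155513978) (.leaf 2139194745))
  (.node (.leaf 2105509253) (.leaf 2156038262))))
  (.node (.node (.node (.leaf 2156036222) (.leaf 2155775632))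
  (.node (.leaf 2189459072) (.leaf 2122217616)))
  (.node (.node (.leaf 2189590652) (.leaf 2189460614))
  (.node (.leaf 2189331070) (.leaf 0))))))
  (.node (.node (.node (.node (.node (.leaf 2172877181) (.leaf 2172484987))
  (.node (.leaf 2105638279) (.leaf 2105505675)))
  (.node (.node (.leaf 2122611332) (.leaf 2223014522))
  (.node (.leaf 2121959552) (.leaf 2189461638))))
  (.node (.node (.node (.leaf 2139062153) (.leaf 2155774608))
  (.node (.leaf 2139063675) (.leaf 2155511942)))
  (.node (.node (.leaf 2155513472) (.leaf 2172880253))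
  (.node (.leaf 2172615539) (.leaf 2189331082)))))
  (.node (.node (.node (.node (.leaf 2139193733) (.leaf 2172746119))
  (.node (.leaf 2156036732) (.leaf 2172749195)))
  (.node (.node (.leaf 2172748147) (.leaf 2172748171))
  (.node (.leaf 2122610814) (.leaf 2156037744))))
  (.node (.node (.node (.leaf 2172618101) (.leaf 2122219134))
  (.node (.leaf 2206171515) (.leaf 2189330058)))
  (.node (.node (.leaf 2189590142) (.leaf 2155773584))
  (.node (.leaf 2122218640) (.leaf 0))))))))
  (.node (.node (.node (.node (.node (.node (.node (.leaf 2172487035) (.leaf 2138800519))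
  (.node (.leaf 2122219146) (.leaf 2139195777)))
  (.node (.node (.leaf 2122481800) (.leaf 2122088072))
  (.node (.leaf 2122349188) (.leaf 2206565235))))
  (.node (.node (.node (.leaf 2172878205) (.leaf 2122482820))
  (.node (.leaf 2189067898) (.leaf 2189462144)))
  (.node (.node (.leaf 2139191685) (.leaf 2206301569))
  (.node (.leaf 2155773058) (.leaf 2122218616)))))
  (.node (.node (.node (.node (.leaf 2122351244) (.leaf 2189457518))
  (.node (.leaf 2189461108) (.leaf 2105375625)))
  (.node (.node (.leaf 2105769871) (.leaf 2155904112))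
  (.node (.leaf 2155776632) (.leaf 2172353921))))
  (.node (.node (.node (.leaf 2105508747) (.leaf 2156297856))
  (.node (.leaf 2156036214) (.leaf 2156037772)))
  (.node (.node (.leaf 2122351762) (.leaf 2139195259))
  (.node (.leaf 2122218632) (.leaf 2155908236))))))
  (.node (.node (.node (.node (.node (.leaf 2155774592) (.leaf 2122611838))
  (.node (.leaf 2172355969) (.leaf 2172616551)))
  (.node (.node (.leaf 2189590640) (.leaf 2138802037))
  (.node (.leaf 2139452793) (.leaf 2189722750))))
  (.node (.node (.node (.leaf 2172746621) (.leaf 2138800511))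
  (.node (.leaf 2172486533) (.leaf 2105376131)))
  (.node (.node (.leaf 2138934147) (.leaf 2189461124))
  (.node (.leaf 2122219138) (.leaf 2122479222)))))
  (.node (.node (.node (.node (.leaf 2189330034) (.leaf 2122480764))
  (.node (.leaf 2139062651) (.leaf 2155772034)))
  (.node (.node (.leaf 2172748665) (.leaf 2172879747))
  (.node (.leaf 2105506699) (.leaf 2105376637))))
  (.node (.node (.node (.leaf 2172747649) (.leaf 2139192693))
  (.node (.leaf 2139191175) (.leaf 2105506687)))
  (.node (.node (.leaf 2155643522) (.leaf 2173010303))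
  (.node (.leaf 2139064209) (.leaf 0)))))))
  (.node (.node (.node (.node (.node (.node (.leaf 2139193223) (.leaf 2105507205))
  (.node (.leaf 2122221186) (.leaf 2155773070)))
  (.node (.node (.leaf 2139192717) (.leaf 2155643534))
  (.node (.leaf 2172617607) (.leaf 2139324273))))
  (.node (.node (.node (.leaf 2156034684) (.leaf 2155774094))
  (.node (.leaf 2206302585) (.leaf 2189326456)))
  (.node (.node (.leaf 2139062157) (.leaf 2155903116))
  (.node (.leaf 2155643012) (.leaf 2189459084)))))
  (.node (.node (.node (.node (.leaf 2122220170) (.leaf 2105770895))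
  (.node (.leaf 2155904630) (.leaf 2139061619)))
  (.node (.node (.leaf 2155774584) (.leaf 2189459590))
  (.node (.leaf 2122088586) (.leaf 2156036202))))
  (.node (.node (.node (.leaf 2156036226) (.leaf 2156167810))
  (.node (.leaf 2172486019) (.leaf 2189329034)))
  (.node (.node (.leaf 2155775094) (.leaf 2172879241))
  (.node (.leaf 2155512954) (.leaf 0))))))
  (.node (.node (.node (.node (.node (.leaf 2155644546) (.leaf 2172489091))
  (.node (.leaf 2189327986) (.leaf 2122613376)))
  (.node (.node (.leaf 2105507723) (.leaf 2088795782))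
  (.node (.leaf 2088797324) (.leaf 2172486031))))
  (.node (.node (.node (.leaf 2172488055) (.leaf 2172749167))
  (.node (.leaf 2172618117) (.leaf 2172877711)))
  (.node (.node (.leaf 2189460590) (.leaf 2139062643))
  (.node (.leaf 2139194765) (.leaf 2122744454)))))
  (.node (.node (.node (.node (.leaf 2155774596) (.leaf 2139323767))
  (.node (.leaf 2139194239) (.leaf 2122482812)))
  (.node (.node (.leaf 2189458554) (.leaf 2155907188))
  (.node (.leaf 2139061627) (.leaf 2172750721))))
  (.node (.node (.node (.leaf 2189329532) (.leaf 2155773066))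
  (.node (.leaf 2139062161) (.leaf 2138799495)))
  (.node (.node (.leaf 2139062141) (.leaf 2189721730))
  (.node (.leaf 2139062647) (.leaf 0))))))))))

/-- Neighbours of the vertices of part B, as digits in base 1024. -/
def nbB : Tree :=
  .node (.node (.node (.node (.node (.node (.node (.node (.node (.node (.leaf 0) (.leaf 151301))
  (.node (.leaf 17130271) (.leaf 121661469275)))
  (.node (.node (.leaf 275174) (.leaf 66434))
  (.node (.leaf 65017576243047) (.leaf 914))))
  (.node (.node (.node (.leaf 118374718111156864) (.leaf 85024324938858771342721866766116))
  (.node (.leaf 10952484959993341280121750) (.leaf 205896138663)))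
  (.node (.node (.leaf 60730752517588229410417583296391357407691251290752728870341394112342) (.leaf 180748))
  (.node (.leaf 14643592068360132462839063725556869274668019598252) (.leaf 447900428529727980468)))))
  (.node (.node (.node (.node (.leaf 233752) (.leaf 136342))
  (.node (.leaf 19630175076350828439) (.leaf 421)))
  (.node (.node (.leaf 113906406018896666) (.leaf 81601588875882))
  (.node (.leaf 572069) (.leaf 870))))
  (.node (.node (.node (.leaf 145423910217195168) (.leaf 65007856360869449810567860758434741))
  (.node (.leaf 103168957858577037508259830748) (.leaf 257309349626126881640312896590147560)))
  (.node (.node (.leaf 316258581325) (.leaf 146305643421371267015083113416))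
  (.node (.leaf 26143353525942811) (.leaf 439775549259))))))
  (.node (.node (.node (.node (.node (.leaf 318363178201819695605197758816271842) (.leaf 648))
  (.node (.leaf 18218799731951069655854741045782425) (.leaf 150792461356857)))
  (.node (.node (.leaf 102813271922548866197208) (.leaf 219295242739931492313))
  (.node (.leaf 22224626485827524830437813077724104) (.leaf 371624835591519555309399744083596229))))
  (.node (.node (.node (.leaf 143220483452099241) (.leaf 51056604687548464078))
  (.node (.leaf 321481262008) (.leaf 310517039783765)))
  (.node (.node (.leaf 34301397773495713346599702216464154053141432163) (.leaf 144357491170205))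
  (.node (.leaf 20455546893592068264270683241404879027154) (.leaf 496746399)))))
  (.node (.node (.node (.node (.leaf 425) (.leaf 141466))
  (.node (.leaf 6750112) (.leaf 245507)))
  (.node (.node (.leaf 61246) (.leaf 130115550487347))
  (.node (.leaf 420) (.leaf 396665576384))))
  (.node (.node (.node (.leaf 108673588498425968508718536199809626907916526132130809318444855896540687608571) (.leaf 134))
  (.node (.leaf 53992422613359782979463373344842038817708764490721131848928192310221) (.leaf 369465)))
  (.node (.node (.leaf 20589725773392057581958969) (.leaf 181525589423377957886909312076748))
  (.node (.leaf 81201484366871482) (.leaf 0)))))))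
  (.node (.node (.node (.node (.node (.node (.leaf 309555) (.leaf 46801781600843119262255626816734097))
  (.node (.leaf 787) (.leaf 280)))
  (.node (.node (.leaf 487) (.leaf 636))
  (.node (.leaf 131708) (.leaf 271))))
  (.node (.node (.node (.leaf 149242241565850935978031493443639522206176224102173469439670) (.leaf 68934721853))
  (.node (.leaf 40) (.leaf 274119902393424967128947942031207918568)))
  (.node (.node (.leaf 40691050302989761582130431259482435931309347781273916576341557854119754597) (.leaf 833))
  (.node (.leaf 21436673076485430005372513248868178843559435177) (.leaf 495489608604)))))
  (.node (.node (.node (.node (.leaf 236485529268471161848224610625534509) (.leaf 42))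
  (.node (.leaf 119439456055977949530000) (.leaf 300143459214608717327495054)))
  (.node (.node (.leaf 99) (.leaf 513))
  (.node (.leaf 431941) (.leaf 339))))
  (.node (.node (.node (.leaf 104576865341898617434024156515138139161252569958508305445107268289276) (.leaf 55248444386151069))
  (.node (.leaf 19102900994353029426875008252754) (.leaf 525)))
  (.node (.node (.leaf 713) (.leaf 244908178795164640519132147551187))
  (.node (.leaf 427) (.leaf 411774392238))))))
  (.node (.node (.node (.node (.node (.leaf 291939477090704893) (.leaf 34644430945439055038859209446754499481))
  (.node (.leaf 10268485) (.leaf 164461273684)))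
  (.node (.node (.leaf 422) (.leaf 235391959))
  (.node (.leaf 348695402) (.leaf 368012776034235500118023583244243))))
  (.node (.node (.node (.leaf 95822716917515942) (.leaf 57484877777976053))
  (.node (.leaf 980) (.leaf 202474)))
  (.node (.node (.leaf 44236322) (.leaf 512))
  (.node (.leaf 13620818075767757503035340) (.leaf 931)))))
  (.node (.node (.node (.node (.leaf 120606722425676296) (.leaf 64084245))
  (.node (.leaf 13884318) (.leaf 443614910694158)))
  (.node (.node (.leaf 132) (.leaf 98607070716514807683804612880667535672288932798))
  (.node (.leaf 79620856455) (.leaf 514995))))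
  (.node (.node (.node (.leaf 77342917251031544507) (.leaf 67))
  (.node (.leaf 161) (.leaf 319)))
  (.node (.node (.leaf 13353363104831245199931816155071496059) (.leaf 425))
  (.node (.leaf 49689656937832841529373159385) (.leaf 0))))))))
  (.node (.node (.node (.node (.node (.node (.node (.leaf 48924128219003140424405216459802647827245535082295404383661054939402896090082) (.leaf 22287))
  (.node (.leaf 776) (.leaf 261545)))
  (.node (.node (.leaf 636) (.leaf 78235225946992))
  (.node (.leaf 92720855) (.leaf 924))))
  (.node (.node (.node (.leaf 174447892712650547104300037825954629557193151593318115962842439337264819) (.leaf 69881215223787037699046))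
  (.node (.leaf 537) (.leaf 231978466644225314660)))
  (.node (.node (.leaf 48388131665361991883086214031500452473708531435838232480490513209572181) (.leaf 205153088644633489))
  (.node (.leaf 14992389896350863281425144145869159636904) (.leaf 440512318821776521891300244)))))
  (.node (.node (.node (.node (.leaf 267057552110518576083378449972477487139228275987810745897547) (.leaf 220998))
  (.node (.leaf 175382941) (.leaf 189)))
  (.node (.node (.leaf 385) (.leaf 86940013911944161))
  (.node (.leaf 352) (.leaf 775988))))
  (.node (.node (.node (.leaf 134450164282011) (.leaf 67597566253121651571155614073536433))
  (.node (.leaf 14864246074153808975712578550634953817902108282155936816031550431) (.leaf 239163256891674620105363100485)))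
  (.node (.node (.leaf 48439135) (.leaf 141733176114274939909253762749216100127685))
  (.node (.leaf 23197351481768) (.leaf 576))))))
  (.node (.node (.node (.node (.node (.leaf 361346647665748001100740492491331722654127504177628) (.leaf 54516459843596525903966111))
  (.node (.leaf 277196) (.leaf 766)))
  (.node (.node (.leaf 105135853218258694) (.leaf 988))
  (.node (.leaf 310942353) (.leaf 325031067086407867345865))))
  (.node (.node (.node (.leaf 182185602423226115174461771422024626421205040206315142208372959389138196154) (.leaf 62092981470419761))
  (.node (.leaf 796521) (.leaf 219792761319748442)))
  (.node (.node (.leaf 30759250468423618726737) (.leaf 143104816658))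
  (.node (.leaf 458311) (.leaf 574)))))
  (.node (.node (.node (.node (.leaf 390) (.leaf 43614911425719752589257698))
  (.node (.leaf 85) (.leaf 203476972401)))
  (.node (.node (.leaf 146631138391840573) (.leaf 141701248659196521740641149272796453330873))
  (.node (.leaf 89297) (.leaf 471244461599679))))
  (.node (.node (.node (.leaf 117746367214856825150885486276571575600445417951565438383899255362116891939573) (.leaf 314))
  (.node (.leaf 11602707977855388587) (.leaf 446)))
  (.node (.node (.leaf 138836878405098054251405155125) (.leaf 121197864293802))
  (.node (.leaf 77736521) (.leaf 0)))))))
  (.node (.node (.node (.node (.node (.node (.leaf 327990009133213908820494809) (.leaf 30469774176198355))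
  (.node (.leaf 345) (.leaf 152223149)))
  (.node (.node (.leaf 75441294068) (.leaf 336))
  (.node (.leaf 142925777) (.leaf 323))))
  (.node (.node (.node (.leaf 131740514207907035469859567183238638254) (.leaf 43751145509419980873670))
  (.node (.leaf 48614514369) (.leaf 217937)))
  (.node (.node (.leaf 28368826003107463451377) (.leaf 909))
  (.node (.leaf 574) (.leaf 402854646626032)))))
  (.node (.node (.node (.node (.leaf 228716124731636564410841266023586376) (.leaf 41))
  (.node (.leaf 876) (.leaf 169574)))
  (.node (.node (.leaf 173339) (.leaf 95786553927409))
  (.node (.leaf 94) (.leaf 369846685267941))))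
  (.node (.node (.node (.leaf 98449417193395646376394309872084872436290246978411277770172024216027866) (.leaf 402))
  (.node (.leaf 35271439102201459026031548188889611548701478264476833265861951726792184363422694) (.leaf 210)))
  (.node (.node (.leaf 19997032517074295487539181656597121911) (.leaf 499554))
  (.node (.leaf 39760653441729062871) (.leaf 0))))))
  (.node (.node (.node (.node (.node (.leaf 256170815513019769458936414083580214364607442115383877) (.leaf 397219))
  (.node (.leaf 16) (.leaf 523)))
  (.node (.node (.leaf 55210295040) (.leaf 223645))
  (.node (.leaf 220) (.leaf 641997))))
  (.node (.node (.node (.leaf 271054503) (.leaf 240597))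
  (.node (.leaf 11134179151808814511861702696831882378960945294346209755170277767300186505173977) (.leaf 215243212)))
  (.node (.node (.leaf 210479) (.leaf 147889617300501159414555413883608972501391306))
  (.node (.leaf 53784761144) (.leaf 583)))))
  (.node (.node (.node (.node (.leaf 167801034781841761157722990138332261621681851151813257) (.leaf 48379039337954322907437703113))
  (.node (.leaf 15347500681679389214758534565651841234950224130457105319) (.leaf 878)))
  (.node (.node (.leaf 42425718912264243433413937547682343786084428763593565867858) (.leaf 512))
  (.node (.leaf 55140262955907) (.leaf 414737430713648054))))
  (.node (.node (.node (.leaf 71505756567015007706929830990408446) (.leaf 0))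
  (.node (.leaf 15177258571) (.leaf 242)))
  (.node (.node (.leaf 13660550297088049925669228930209550286723) (.leaf 432723))
  (.node (.leaf 37080971) (.leaf 0)))))))))
  (.node (.node (.node (.node (.node (.node (.node (.node (.leaf 65632418816984444638304333870319507109657003048103611248448559382479849) (.leaf 123392))
  (.node (.leaf 21929179201079618336) (.leaf 264070)))
  (.node (.node (.leaf 73423) (.leaf 73))
  (.node (.leaf 142151966472764) (.leaf 312))))
  (.node (.node (.node (.leaf 177541355175873514887018634761186654441398211711371050610316) (.leaf 40636711735791998798058119701477))
  (.node (.leaf 328436952992) (.leaf 353638)))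
  (.node (.node (.leaf 135442613720033078) (.leaf 122248223258020284673494926))
  (.node (.leaf 13572768643954) (.leaf 395900698401912535961)))))
  (.node (.node (.node (.node (.leaf 239925551621200682704421) (.leaf 25))
  (.node (.leaf 24300386261010484266051415) (.leaf 254779251584)))
  (.node (.node (.leaf 104215) (.leaf 236382707282842444793819))
  (.node (.leaf 356235) (.leaf 884))))
  (.node (.node (.node (.leaf 294) (.leaf 0))
  (.node (.leaf 13975155967137271811779591913419) (.leaf 239923224471092044070889)))
  (.node (.node (.leaf 545) (.leaf 166305282316637046462608296953429710806995))
  (.node (.leaf 259110878639) (.leaf 868))))))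
  (.node (.node (.node (.node (.node (.leaf 323424282599682070590298406338) (.leaf 81293810245928437087622045))
  (.node (.leaf 349759) (.leaf 761)))
  (.node (.node (.leaf 303) (.leaf 998))
  (.node (.leaf 140831543) (.leaf 380651558859))))
  (.node (.node (.node (.leaf 165820713062130495831353334681279717266003551286901185135798899602786989) (.leaf 117298679608))
  (.node (.leaf 32) (.leaf 360)))
  (.node (.node (.leaf 511) (.leaf 162759279455860735888))
  (.node (.leaf 16001418023137925546942372892915612624) (.leaf 469230538011788314556311)))))
  (.node (.node (.node (.node (.leaf 316804) (.leaf 33045804957649))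
  (.node (.leaf 258) (.leaf 242891610025352296632489463724)))
  (.node (.node (.leaf 38602214811029974441294106023950084928) (.leaf 184916798))
  (.node (.leaf 93395) (.leaf 614))))
  (.node (.node (.node (.leaf 113954376673807372604816069578224687676019587509708953242881079321638696433495030526) (.leaf 146714857085430533))
  (.node (.leaf 16835) (.leaf 648)))
  (.node (.node (.leaf 176) (.leaf 115611306382097))
  (.node (.leaf 29074075288) (.leaf 0)))))))
  (.node (.node (.node (.node (.node (.node (.leaf 408490485454729027258088110560032135330324166339374324543994170853) (.leaf 43710))
  (.node (.leaf 129271131) (.leaf 264644)))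
  (.node (.node (.leaf 76846937098212918016736) (.leaf 486544168840053))
  (.node (.leaf 146061538943122225107) (.leaf 574228))))
  (.node (.node (.node (.leaf 163624218453023663368256643956855498026144139487679824340958695814836) (.leaf 58631055503152964552975928822425444095968))
  (.node (.leaf 172) (.leaf 241723500085926755366579815642530786)))
  (.node (.node (.leaf 54298246292799298733406087544596892261654797146) (.leaf 109716394809))
  (.node (.leaf 14633622305490200376850941987784875535548873095110) (.leaf 447936710347993287822335386994586)))))
  (.node (.node (.node (.node (.leaf 210218539850185) (.leaf 50906727375721307))
  (.node (.leaf 233884) (.leaf 897)))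
  (.node (.node (.leaf 103202) (.leaf 112876760053088230824167649459178270187173377982))
  (.node (.leaf 7) (.leaf 314))))
  (.node (.node (.node (.leaf 100827750698276841414792630229286925562618179782133399383914983286089943800) (.leaf 56255990701863))
  (.node (.leaf 29284332420850092040925426236815891867260763879351) (.leaf 332)))
  (.node (.node (.leaf 62799) (.leaf 132076893971131))
  (.node (.leaf 52203776705391566914514912) (.leaf 0))))))
  (.node (.node (.node (.node (.node (.leaf 266853244620503151093467435193746604713564147460720227990726282810) (.leaf 537))
  (.node (.leaf 108329740354199444) (.leaf 180036260970858367784)))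
  (.node (.node (.leaf 189) (.leaf 80))
  (.node (.leaf 804) (.leaf 360992421814596554))))
  (.node (.node (.node (.leaf 134) (.leaf 782138))
  (.node (.leaf 27363561663545055261498227275066531939547608610883334544750535) (.leaf 222604436668390)))
  (.node (.node (.leaf 0) (.leaf 133830729435636394969160044493))
  (.node (.leaf 26004633155092103215247309946133441) (.leaf 836)))))
  (.node (.node (.node (.node (.leaf 171258114477388684086697916900887250280577226883428975757959) (.leaf 33037243498221493995418629901275))
  (.node (.leaf 14522531439648826014155575) (.leaf 267875202824)))
  (.node (.node (.leaf 44928840087503552712903012475911987561426765675623156724596082913127244) (.leaf 120019978392513414304792748734821320477633344448))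
  (.node (.leaf 57198380) (.leaf 357312361))))
  (.node (.node (.node (.leaf 62863797060348) (.leaf 74651633860113125520082616257))
  (.node (.leaf 124) (.leaf 919)))
  (.node (.node (.leaf 117626504) (.leaf 108))
  (.node (.leaf 38542153050342607007779793896) (.leaf 0))))))))
  (.node (.node (.node (.node (.node (.node (.node (.leaf 303) (.leaf 41))
  (.node (.leaf 60937439834405649) (.leaf 627)))
  (.node (.node (.leaf 62143890) (.leaf 448013))
  (.node (.leaf 94352) (.leaf 435))))
  (.node (.node (.node (.leaf 129965001088610) (.leaf 59661624752934811789911364935642))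
  (.node (.leaf 180322634017043381) (.leaf 236767958410204)))
  (.node (.node (.leaf 54370855551795904412321443844349841220253322191918537788644747104) (.leaf 116162671680362303))
  (.node (.leaf 317025750) (.leaf 387030042333)))))
  (.node (.node (.node (.node (.leaf 238716116688815290539541) (.leaf 414539))
  (.node (.leaf 13674764) (.leaf 256307070)))
  (.node (.node (.leaf 304483094) (.leaf 798))
  (.node (.leaf 94887) (.leaf 590))))
  (.node (.node (.node (.leaf 177514140) (.leaf 392423774875))
  (.node (.leaf 8557144052098605221858156) (.leaf 446)))
  (.node (.node (.leaf 38323701431477090) (.leaf 345))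
  (.node (.leaf 13226125850) (.leaf 609048410))))))
  (.node (.node (.node (.node (.node (.leaf 213942320548) (.leaf 107699101))
  (.node (.leaf 9) (.leaf 354879631145)))
  (.node (.node (.leaf 600) (.leaf 195451724))
  (.node (.leaf 545) (.leaf 911313))))
  (.node (.node (.node (.leaf 89208) (.leaf 205))
  (.node (.leaf 259280644) (.leaf 243583999610282887)))
  (.node (.node (.leaf 50948404985373288141) (.leaf 190269244))
  (.node (.leaf 19725228598) (.leaf 387)))))
  (.node (.node (.node (.node (.leaf 227758) (.leaf 196565737))
  (.node (.leaf 21946867296235021875141160331201384283425443066797) (.leaf 183)))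
  (.node (.node (.leaf 45882510661150094553397269253) (.leaf 98145023910757442866010280121836764984250))
  (.node (.leaf 158578042) (.leaf 815036))))
  (.node (.node (.node (.leaf 71574811079961395890) (.leaf 71068457101944781))
  (.node (.leaf 136768) (.leaf 911)))
  (.node (.node (.leaf 630904690) (.leaf 639763))
  (.node (.leaf 758) (.leaf 0)))))))
  (.node (.node (.node (.node (.node (.node (.leaf 378012173172624964579514189883270815944478416384278789440892384) (.leaf 70768397556814318158411095961))
  (.node (.leaf 360) (.leaf 275191784325)))
  (.node (.node (.leaf 82486605878484019283330462370561) (.leaf 236))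
  (.node (.leaf 80286684236349392) (.leaf 345767904865346492386842184659))))
  (.node (.node (.node (.leaf 138491697803848966832) (.leaf 84391023018189470687))
  (.node (.leaf 294) (.leaf 215811733428649)))
  (.node (.node (.leaf 55669186934879016793280198832739115638653076456085629507006422131547) (.leaf 154445330968431419))
  (.node (.leaf 25729529829793110909337176251084891642680780747) (.leaf 432552460107455727040414)))))
  (.node (.node (.node (.node (.leaf 184) (.leaf 39445))
  (.node (.leaf 259) (.leaf 926)))
  (.node (.node (.leaf 25) (.leaf 101156460719380241642745067332135936952))
  (.node (.leaf 7956401074) (.leaf 476986))))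
  (.node (.node (.node (.leaf 92694645179268160892045697977060872554995234194296364805868) (.leaf 315585042624302173387720))
  (.node (.leaf 20932609563865545970991197040603973727621641115000727087774670) (.leaf 981)))
  (.node (.node (.leaf 13686376918119344144468658991) (.leaf 156260571498229988022050262357194123590446031))
  (.node (.leaf 127) (.leaf 0))))))
  (.node (.node (.node (.node (.node (.leaf 219300707890) (.leaf 131940))
  (.node (.leaf 19966503635790) (.leaf 316072)))
  (.node (.node (.leaf 191) (.leaf 74717))
  (.node (.leaf 342) (.leaf 327699990))))
  (.node (.node (.node (.leaf 314846) (.leaf 166931263))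
  (.node (.leaf 699) (.leaf 555)))
  (.node (.node (.leaf 26406722) (.leaf 141))
  (.node (.leaf 146) (.leaf 932)))))
  (.node (.node (.node (.node (.leaf 248127) (.leaf 664450))
  (.node (.leaf 17292769570016099048209251965751760710233880260836402815908) (.leaf 487)))
  (.node (.node (.leaf 38953237375209210054458416354358143057193728882736691427022642657156740069273424) (.leaf 131464))
  (.node (.leaf 63535504742) (.leaf 384258362054582))))
  (.node (.node (.node (.leaf 94753834628842) (.leaf 75292806539875579856))
  (.node (.leaf 139237) (.leaf 875)))
  (.node (.node (.leaf 12946956775) (.leaf 407288538))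
  (.node (.leaf 74239906) (.leaf 0))))))))))
  (.node (.node (.node (.node (.node (.node (.node (.node (.node (.leaf 624803659442770205095334373572467086088992397656672953885921966721103049377138) (.leaf 121379641))
  (.node (.leaf 19334) (.leaf 166220196905836083834)))
  (.node (.node (.leaf 63884816472672828503250471416401481479) (.leaf 75240866450994097936))
  (.node (.leaf 285) (.leaf 266))))
  (.node (.node (.node (.leaf 163416342277669153088164157509858591029970742130325825652363) (.leaf 53253733310761728912096565664162984921))
  (.node (.leaf 16096150169146168522350501142956301112933571278042116868973481) (.leaf 257628)))
  (.node (.node (.leaf 35398207439416185927740967209941244288324762184205082583449444) (.leaf 295693872020))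
  (.node (.leaf 26590576507556071173) (.leaf 430188982466893049640853)))))
  (.node (.node (.node (.node (.leaf 273444923333889148836083867823239115494514689197096620227255916100) (.leaf 124))
  (.node (.leaf 18) (.leaf 564)))
  (.node (.node (.leaf 610) (.leaf 96920586658461220963303))
  (.node (.leaf 25533292) (.leaf 529255))))
  (.node (.node (.node (.leaf 140) (.leaf 77774467863714742))
  (.node (.leaf 21757029076000434310880422497072614004483700183198818971707947644745967161309) (.leaf 860)))
  (.node (.node (.leaf 43191118) (.leaf 139726245097529043424362151302990336969))
  (.node (.leaf 23302576) (.leaf 415058714507181))))))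
  (.node (.node (.node (.node (.node (.leaf 381221338369844495926146636349125329050114738244597334463182308) (.leaf 34740057963))
  (.node (.leaf 226976605) (.leaf 354)))
  (.node (.node (.leaf 123559) (.leaf 112413760867756473655267))
  (.node (.leaf 83900030575) (.leaf 362603397296711210954))))
  (.node (.node (.node (.leaf 135852) (.leaf 155886))
  (.node (.leaf 31792840034748264) (.leaf 223384828025388502317028)))
  (.node (.node (.leaf 833) (.leaf 182680368))
  (.node (.leaf 14642414409172233091896595518723143631) (.leaf 643820)))))
  (.node (.node (.node (.node (.leaf 219328016983) (.leaf 158))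
  (.node (.leaf 26238022502) (.leaf 407233)))
  (.node (.node (.leaf 65850444829503423212981466397558958369417083012927) (.leaf 110026459675332764579735441893515757266559496125))
  (.node (.leaf 93341) (.leaf 443123481))))
  (.node (.node (.node (.leaf 115847803459215017921349056870558425523773689187367998308283694486236640778504617728) (.leaf 87774864008442427334))
  (.node (.leaf 13188214411002499937790811199543604926552742274729908113888971752) (.leaf 261472052)))
  (.node (.node (.leaf 318804) (.leaf 260))
  (.node (.leaf 39054277508502215655395) (.leaf 0)))))))
  (.node (.node (.node (.node (.node (.node (.leaf 289685347065470057940) (.leaf 371862226))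
  (.node (.leaf 11281) (.leaf 0)))
  (.node (.node (.leaf 57484748714097408) (.leaf 522))
  (.node (.leaf 19540473168566558216388406277016113611999171) (.leaf 269))))
  (.node (.node (.node (.leaf 143722958562507483269653705218652271285) (.leaf 59899726045342927754228615629383643088))
  (.node (.leaf 36462958245812) (.leaf 360818)))
  (.node (.node (.leaf 64245497695478521311622133738674885511723174935640347531712205655) (.leaf 408016))
  (.node (.leaf 12563272975363948298265543165761178624266181) (.leaf 441191979332714423969675891613)))))
  (.node (.node (.node (.node (.leaf 0) (.leaf 32448604678))
  (.node (.leaf 926) (.leaf 208229543103368893186315160)))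
  (.node (.node (.leaf 814) (.leaf 511))
  (.node (.leaf 8816462) (.leaf 466))))
  (.node (.node (.node (.leaf 116834345383030615114409133120029130721066721321103578666981459440801663489382130) (.leaf 167))
  (.node (.leaf 28323097294177132241086586150933931765003037663011372817585195071930572772) (.leaf 234)))
  (.node (.node (.leaf 220413997763413) (.leaf 387636564694996))
  (.node (.leaf 145903418) (.leaf 605776))))))
  (.node (.node (.node (.node (.node (.leaf 0) (.leaf 419))
  (.node (.leaf 12466555456331363177450912521) (.leaf 156241)))
  (.node (.node (.leaf 152736013756) (.leaf 224913229))
  (.node (.leaf 661) (.leaf 313947758189581634508))))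
  (.node (.node (.node (.leaf 514) (.leaf 758))
  (.node (.leaf 10133091222) (.leaf 256609611764185533599625)))
  (.node (.node (.leaf 44953718492749684732007112) (.leaf 906))
  (.node (.leaf 43104706) (.leaf 409454067392427)))))
  (.node (.node (.node (.node (.leaf 174597227243435067080747679506093203593729127101643332264776045194) (.leaf 66863825785))
  (.node (.leaf 20981398939628453184155934763606706529721801710141358) (.leaf 225624800626600)))
  (.node (.node (.leaf 53050108904847480155888539342805631280884537) (.leaf 112449345))
  (.node (.leaf 159) (.leaf 711602))))
  (.node (.node (.node (.leaf 108818908145789762315484301115869253352822059839555489578547089243873021) (.leaf 61))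
  (.node (.leaf 309798829) (.leaf 628)))
  (.node (.node (.leaf 26004666254109043212930613202709355) (.leaf 129448))
  (.node (.leaf 32785952557258721) (.leaf 0))))))))
  (.node (.node (.node (.node (.node (.node (.node (.leaf 58383732722236818038413514822357149304462762901317166984572595603115031527) (.leaf 44045136694167))
  (.node (.leaf 55145) (.leaf 136465590)))
  (.node (.node (.leaf 76269872728157161209435908) (.leaf 627))
  (.node (.leaf 700) (.leaf 701))))
  (.node (.node (.node (.leaf 168020025065252394677702108949801233854260004070225155882123677368) (.leaf 38187488585010432218896672453569793536971))
  (.node (.leaf 7) (.leaf 345)))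
  (.node (.node (.leaf 117882422536971) (.leaf 116220069400357878425656216))
  (.node (.leaf 19536323232999379081526279981218114553366439) (.leaf 447375629013233932075673731985)))))
  (.node (.node (.node (.node (.leaf 183731930207312438) (.leaf 135))
  (.node (.leaf 102189782) (.leaf 280466616173907015577)))
  (.node (.node (.leaf 163) (.leaf 236520))
  (.node (.leaf 6403) (.leaf 341))))
  (.node (.node (.node (.leaf 163895323610650925726) (.leaf 53))
  (.node (.leaf 57907937152866638581360679727671410355814156937138387822777312) (.leaf 252080191700774044023679565659344871)))
  (.node (.node (.leaf 44979810008903052875048050614267877884771) (.leaf 146505347296143345653208660973484483739062214))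
  (.node (.leaf 26619381458538) (.leaf 412))))))
  (.node (.node (.node (.node (.node (.leaf 226370476950116143407242726) (.leaf 45992422187460174213444511))
  (.node (.leaf 165237) (.leaf 164)))
  (.node (.node (.leaf 93415531) (.leaf 207249994368835))
  (.node (.leaf 245483504701288) (.leaf 333413113467))))
  (.node (.node (.node (.leaf 259) (.leaf 197))
  (.node (.leaf 648) (.leaf 231651073587163361417190)))
  (.node (.node (.leaf 42252417285220437911066326826969095544677) (.leaf 101778))
  (.node (.leaf 15014073548849431683886966750330474379175692105356231) (.leaf 350)))))
  (.node (.node (.node (.node (.leaf 604) (.leaf 43952940202913231971166635603995333603))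
  (.node (.leaf 7475) (.leaf 489150)))
  (.node (.node (.leaf 65751214535) (.leaf 97170162285356439777025547079458284472))
  (.node (.leaf 386) (.leaf 394521151448265816546406335))))
  (.node (.node (.node (.leaf 87170975265200108616099535278838402739080982249) (.leaf 130425667215887571719))
  (.node (.leaf 12565) (.leaf 341150520)))
  (.node (.node (.leaf 65686615862) (.leaf 179368150167020261))
  (.node (.leaf 78413) (.leaf 0)))))))
  (.node (.node (.node (.node (.node (.node (.leaf 281361803) (.leaf 43756937085811663195035))
  (.node (.leaf 16981693422835722897178474) (.leaf 259)))
  (.node (.node (.leaf 65937) (.leaf 884))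
  (.node (.leaf 96506257631943875866937868899129) (.leaf 338602497649))))
  (.node (.node (.node (.leaf 176881606967622063874945725687754325248616684885513915988598918689709531825) (.leaf 48248802624222773766099477241805))
  (.node (.leaf 299807) (.leaf 225140955794088209377)))
  (.node (.node (.leaf 41586646003526619878563099500685148) (.leaf 224801297))
  (.node (.leaf 25297012611183504004348740983952712650) (.leaf 423643995755835534239)))))
  (.node (.node (.node (.node (.leaf 235581785997890824301669797748252598230876818056783) (.leaf 38409))
  (.node (.leaf 9) (.leaf 170173023)))
  (.node (.node (.leaf 96) (.leaf 119968886931732614766108317556809115566614484287424))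
  (.node (.leaf 90371547) (.leaf 386506))))
  (.node (.node (.node (.leaf 99043632391312622667409483908076051678546642674260161722405575988672689907) (.leaf 78806526923))
  (.node (.leaf 25495954680894972992489894293641931078212998575013840) (.leaf 831)))
  (.node (.node (.leaf 23783153633867755395631623596060062377689984) (.leaf 186740853058342635342650038508100202214354))
  (.node (.leaf 518077) (.leaf 0))))))
  (.node (.node (.node (.node (.node (.leaf 236853383152784600848091928145578974760) (.leaf 233))
  (.node (.leaf 78303971723011) (.leaf 530)))
  (.node (.node (.leaf 439) (.leaf 434622155))
  (.node (.leaf 341) (.leaf 329095011052494))))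
  (.node (.node (.node (.leaf 307) (.leaf 196350))
  (.node (.leaf 18155318021248198361952146797646302711888674616302309470108602330) (.leaf 238110)))
  (.node (.node (.leaf 45014826723012412245) (.leaf 120619941500615236))
  (.node (.leaf 145) (.leaf 587)))))
  (.node (.node (.node (.node (.leaf 162391655198015952531120205399) (.leaf 43286751243817087195449808734788217798086632))
  (.node (.leaf 10150760679067446) (.leaf 491274)))
  (.node (.node (.leaf 39076739092729765835231044036885547886281538) (.leaf 380886))
  (.node (.leaf 13629979381682867153401162650165125747629) (.leaf 569330060512640945))))
  (.node (.node (.node (.leaf 767) (.leaf 69047407369))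
  (.node (.leaf 142926) (.leaf 302427257570627265435)))
  (.node (.node (.leaf 13343260146229367179761397) (.leaf 138846))
  (.node (.leaf 112784) (.leaf 0)))))))))
  (.node (.node (.node (.node (.node (.node (.node (.node (.leaf 48384807765508520079734559788556328707871055408746514647277762073536483) (.leaf 81))
  (.node (.leaf 10657) (.leaf 183)))
  (.node (.node (.leaf 658220806) (.leaf 83179597733462654887))
  (.node (.leaf 931) (.leaf 466279212))))
  (.node (.node (.node (.leaf 145355909518756924487243405) (.leaf 59040555))
  (.node (.leaf 24481) (.leaf 238594730516044852817822547404769)))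
  (.node (.node (.leaf 43456481162689473627043209390671107029348885039894210409215828) (.leaf 113538930041430433647504))
  (.node (.leaf 56) (.leaf 412035971062073890707)))))
  (.node (.node (.node (.node (.leaf 396828) (.leaf 30292727309))
  (.node (.leaf 231418640) (.leaf 176343637901)))
  (.node (.node (.leaf 379) (.leaf 111716424089412585))
  (.node (.leaf 24834956) (.leaf 319))))
  (.node (.node (.node (.leaf 137383) (.leaf 85622374800486203723550213046))
  (.node (.leaf 67457229697853102299419102195636824325737829649827806) (.leaf 265071094878310531494378797171449833)))
  (.node (.node (.leaf 562900) (.leaf 187))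
  (.node (.leaf 104602004063025) (.leaf 477532653514100864528229))))))
  (.node (.node (.node (.node (.node (.leaf 264402897367) (.leaf 555721))
  (.node (.leaf 14889217955603186580154293128) (.leaf 352)))
  (.node (.node (.leaf 98907245317) (.leaf 236012))
  (.node (.leaf 24264855386356434761112523) (.leaf 968))))
  (.node (.node (.node (.leaf 140870206) (.leaf 243322))
  (.node (.leaf 31583769376) (.leaf 210317528838874)))
  (.node (.node (.leaf 521726) (.leaf 433714937622212))
  (.node (.leaf 24882686613648730956525427878608348906895555103690) (.leaf 422380793980868590671117208)))))
  (.node (.node (.node (.node (.leaf 225881688) (.leaf 35969510279309468380090551265))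
  (.node (.leaf 8098) (.leaf 601)))
  (.node (.node (.leaf 33838702658265915) (.leaf 97172860855884942018192019529143641792424374207))
  (.node (.leaf 690) (.leaf 618))))
  (.node (.node (.node (.leaf 87220061279165285306730079646321141793526) (.leaf 405368))
  (.node (.leaf 984) (.leaf 478290955061)))
  (.node (.node (.leaf 20024761282661151379412844888831776763759417213) (.leaf 120192104156073))
  (.node (.leaf 144407426952) (.leaf 0)))))))
  (.node (.node (.node (.node (.node (.node (.leaf 302018076193518538532572339062249) (.leaf 42891033688026025292847915345003412))
  (.node (.leaf 58953397056885712660) (.leaf 149)))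
  (.node (.node (.leaf 96628201) (.leaf 84710033428437877))
  (.node (.leaf 312) (.leaf 389575640))))
  (.node (.node (.node (.leaf 159536855385060201451479372795392845545981378124772437679) (.leaf 72136208061927730428796))
  (.node (.leaf 290858604123786223545) (.leaf 248812552277612268879872888546943534051)))
  (.node (.node (.leaf 40466484361502128345250501911912490990401378) (.leaf 134))
  (.node (.leaf 20997455554234940379212281156337655218913314255869907) (.leaf 408654895766598041490)))))
  (.node (.node (.node (.node (.leaf 276371784530344626284482305462704661378200244501737686028130223128117834) (.leaf 232978))
  (.node (.leaf 18098252780306249) (.leaf 197)))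
  (.node (.node (.leaf 382475) (.leaf 357))
  (.node (.leaf 947) (.leaf 473912))))
  (.node (.node (.node (.leaf 251) (.leaf 96905545731989718213556))
  (.node (.leaf 32630200729603456367429033554845147011895269214397504319491341689456228777941) (.leaf 338)))
  (.node (.node (.leaf 48490453260232810362) (.leaf 157661156432714051309320029964508872805661647))
  (.node (.leaf 34648360709437159214417760023476109275) (.leaf 0))))))
  (.node (.node (.node (.node (.node (.leaf 231539072391124620257816397770314517059) (.leaf 938))
  (.node (.leaf 17337845059671160660) (.leaf 527)))
  (.node (.node (.leaf 205) (.leaf 78746323))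
  (.node (.leaf 275) (.leaf 316779884582843339))))
  (.node (.node (.node (.leaf 118151) (.leaf 261491327))
  (.node (.leaf 9692692190446133198050264) (.leaf 261407470225456199505161639308254)))
  (.node (.node (.leaf 34702447389723709923381677915) (.leaf 152075078433684034977720979776197065805080526))
  (.node (.leaf 54615184) (.leaf 435046577525825420)))))
  (.node (.node (.node (.node (.leaf 137124361387521334427258137984627) (.leaf 29063865072))
  (.node (.leaf 16878498128960146894760204847407262858231248980833901483) (.leaf 319883)))
  (.node (.node (.leaf 322498517808) (.leaf 129111751401))
  (.node (.leaf 73) (.leaf 417620258604646633421810876341))))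
  (.node (.node (.node (.leaf 0) (.leaf 412881859))
  (.node (.leaf 289) (.leaf 282388383)))
  (.node (.node (.leaf 188203) (.leaf 153999731440))
  (.node (.leaf 53074741953294107) (.leaf 0))))))))
  (.node (.node (.node (.node (.node (.node (.node (.leaf 323388835) (.leaf 41267157338451195367994325435702721432))
  (.node (.leaf 21261674) (.leaf 153282367)))
  (.node (.node (.leaf 91235) (.leaf 77945467))
  (.node (.leaf 147) (.leaf 262))))
  (.node (.node (.node (.leaf 148584467206010143100352942708654694853005408951) (.leaf 70579853))
  (.node (.leaf 171) (.leaf 249500607069792484374928191947499483)))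
  (.node (.node (.leaf 47972) (.leaf 183194))
  (.node (.leaf 22455524396530305362703) (.leaf 408901356307699375953816)))))
  (.node (.node (.node (.node (.leaf 263902170737591393324097443374482598475857021565390699413070) (.leaf 141))
  (.node (.leaf 16614862322741504501650) (.leaf 172473)))
  (.node (.node (.leaf 534) (.leaf 0))
  (.node (.leaf 99247774070643457) (.leaf 347680576))))
  (.node (.node (.node (.leaf 150818467249876) (.leaf 481))
  (.node (.leaf 23101465467412269979844919139040949199878200583097266913507477473) (.leaf 980)))
  (.node (.node (.leaf 207) (.leaf 172877029456364046771748362458113668141542213586))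
  (.node (.leaf 19858) (.leaf 586595))))))
  (.node (.node (.node (.node (.node (.leaf 229330267204220676999707) (.leaf 72825839432589))
  (.node (.leaf 13668576298867759724835789613146163784590) (.leaf 344466351)))
  (.node (.node (.leaf 58228913802) (.leaf 869348))
  (.node (.leaf 552) (.leaf 309574874825))))
  (.node (.node (.node (.leaf 134490804736) (.leaf 267084532))
  (.node (.leaf 9100) (.leaf 400092994427770846)))
  (.node (.node (.leaf 34638535236799589190) (.leaf 516))
  (.node (.leaf 36991544) (.leaf 836)))))
  (.node (.node (.node (.node (.leaf 133342606897) (.leaf 45271891449392257389058745547685300183))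
  (.node (.leaf 19828867474593017766540339073) (.leaf 184)))
  (.node (.node (.leaf 44287068843) (.leaf 83952491883386648721282))
  (.node (.leaf 78206) (.leaf 772))))
  (.node (.node (.node (.leaf 119546775702859946058790082815655287370628192417848267672999733837485808796409) (.leaf 124103075312440200218380))
  (.node (.leaf 143) (.leaf 259775115475751)))
  (.node (.node (.leaf 27259892310351517852987208448593338618751) (.leaf 390))
  (.node (.leaf 44130353737922496) (.leaf 0)))))))
  (.node (.node (.node (.node (.node (.node (.leaf 345262990623629491750222887295085066480151513497057) (.leaf 40207100798125855153045))
  (.node (.leaf 14223740400165678937976) (.leaf 139411)))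
  (.node (.node (.leaf 80374293563120) (.leaf 272053510473433))
  (.node (.leaf 140993230657) (.leaf 522))))
  (.node (.node (.node (.leaf 170285282197444440366661452700880604300895772726304335530) (.leaf 474860))
  (.node (.leaf 183) (.leaf 851)))
  (.node (.node (.leaf 0) (.leaf 189239))
  (.node (.leaf 18077334845393) (.leaf 439311665217329484615543710)))))
  (.node (.node (.node (.node (.leaf 264319865882545817771035362773823271222564651566) (.leaf 528))
  (.node (.leaf 23270) (.leaf 358559078001888002)))
  (.node (.node (.leaf 41987570628490826750569043941361729279453913552830258) (.leaf 97499031185355204680185039939235705))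
  (.node (.leaf 8817148) (.leaf 412076661953808756669))))
  (.node (.node (.node (.leaf 102596318139707367078360755100729820893030789347815989272789085818355169015) (.leaf 74776319))
  (.node (.leaf 24203341604662239858386252372727385993443793986952725200907889710918605) (.leaf 339539873)))
  (.node (.node (.leaf 183) (.leaf 135114244692066009040))
  (.node (.leaf 144116) (.leaf 0))))))
  (.node (.node (.node (.node (.node (.leaf 284957014919553137534331867122476266441399017398665525233663394365) (.leaf 156))
  (.node (.leaf 115474785341797074833) (.leaf 264)))
  (.node (.node (.leaf 138667) (.leaf 998))
  (.node (.leaf 559) (.leaf 413790892880508880))))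
  (.node (.node (.node (.leaf 139786332895898) (.leaf 74964681782236508474536157507416487804853))
  (.node (.leaf 12402490532157125829995431431567004106650308586023290195760167503008838619) (.leaf 370)))
  (.node (.node (.leaf 35437287401580275119471216875280418949955) (.leaf 169737118607867188837864341151506994635820727470023))
  (.node (.leaf 92309) (.leaf 933)))))
  (.node (.node (.node (.node (.leaf 168918574865915055872668338652533398670844956743791495043747471) (.leaf 78003519080597723977667))
  (.node (.leaf 13856518592080241573) (.leaf 194830784669447)))
  (.node (.node (.leaf 70873208905635055702300171154049479808851) (.leaf 97463))
  (.node (.leaf 20963024024490) (.leaf 401943616371818956344710069))))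
  (.node (.node (.node (.leaf 382589) (.leaf 157566661914379))
  (.node (.leaf 16302) (.leaf 259268223)))
  (.node (.node (.leaf 12907349726) (.leaf 604))
  (.node (.leaf 830) (.leaf 0))))))))))

/-- The refutation for part B: clauses with their derivations. -/
def prfB : List (Nat × Nat) :=
  [(429111921208207086250740186290141660890901688281204054461480804428554612670974625169886744374281041306775278864555157137179480023997969558945001247582055087548,
    3683326197151913745552882430250146154162187895377785137492205531515235618187389086049726979527362184773164989989445754225564731293078797800494561310026876182955277678429456246406652957097360508037038475413748031035953813680353200992702164090629343210672845728348397636614604841183964892978491435384837),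
   (348953772053929747315772009197005,
    17813136461854333487242366477772099209510552855632198109742853152563051022916748514893522004271803818157035021587550287427697845281143612864576800776693617401423230410392305030827731223645817980080957743340472502059172010833308933076174226507355852376102985448904453283402537886117588196239042980190040906727783039850613995356438924811886379741895185398845772055697744004154032443934538440245253),
   (21298448001338485553941162670,
    9288348514474555515765575237150061408409321259903329904237990427752373155715617123832265364733154924605317543334078429362686545486702423331201618914045017995648770944368848975146334800104387866574002209321154051548139480300972857583852741296698749632491348978743237218411749996015921651953761978453869120266281036283465512893435929796008276854391273079147711840829659508444503393833034376168827383321463145229424132101),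
   (1299954101644194674923166,
    4706088344329884383014059936494272510228718964718164147233680533880837),
   (79342902428137445022,
    314876773423506078278790526351652723423910674481260208608327769701381295964165),
   (5717259868979108574020879218014399150,
    8740639660325059660962097273326232564360917786117054129934827539074360835574974202336600866460867551218902677902552789354586195854942334946763893854673174218489750510650568420038226354114090281080529481585851141891274883315139932960548604666032397981359013843429725429492127543701474997318633797364552792696424617824135543513720937738526719739459324421281071296670027775450696672388094228980022034934990668638640188458821402756378600348853780736895026442046454426408252591454229112303109448491966770598876585173471252174769258866491392005),
   (9846951307848936079537943673,
    15577661588986431580489150749573136),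
   (1364855333198974267657714025267560944176158729698149566222059356964093550554402775863291789731737262023702708315508087796155579124,
    31281182532419831389461180921148386581396977285482984470590025902536706114262699937334435662212362547653703684578254912898738912280390949636689405621834155299361173451499032561822847483697248877694580731582516718630952580910615769890000032231848096836719753804983331747107971880891678245578228715967043857440569930472650863639446234283154253425085285642945738584323180425500010007456115754773692140581074371192217699579038975671801829288387930603890886402283232326280937231535879056755077583281659032577096677867452803620514270323934664169218398759778860993287626029716305085404546427134390642956525039396580706158749930890356032847492856092477724023279290124943141333728014815151992944222390611306475349858332869611715128546802501188388519941),
   (491687849700,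
    13512329982856200208),
   (348953849425175933263113726962350,
    1882191147478678278868021037520363099226620269010408019930551439968495526471834664965),
   (21298452723704968423586376366,
    4086271889068155782157120961141650697184819480011987365600221323541537302316552804568786554857060603041868446725164431553556997802048948610737465241400892129923123888860279142137423790716483444757981809639831412477869806230638534009065819961524360169599895283443501132865197918904640321354195803629196728151442035736227874315264775103037002534087874303568642198436727479625670807177616839055490682573746118154927903253915676275828086235911895598498374197914050950890045517987624800130646944950553261448019726700966885102640848958832300577357362906525304511951041465596923355062776089854243766758980596012432334707572025378555895059221032473619331785644397654858522943537919563295562041558530188276401365229810393430701547378350543989667869962927907187816493350917),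
   (79343592944610012657,
    459277464527486248593800240036126490629),
   (79342920020323489438,
    102089515822052095245003238000017260464673296574434355226827377672818219094208071755491960850900026697914055115326282247173133826251532911585524312235179587949251011743344728848039132609672902297729540899207093974319914650186728986464243133610881661230614075952871841479054432724458670809906524668508097146092982217691497623802689916799473933011949042876031670148447414598634488231237443721104043265120485503292881685608875032581),
   (21298636902040254463261338273,
    39431976603210028071857925890033683003280766689684605087866330436285366277),
   (95124222907911826194,
    17130999609201925242892),
   (21298599121244895183655163550,
    63546049297916893498704549962115522491676966692096169069034286493152683002615012870703328288416110866358948371886458340798117370913502109629276777625779071556015246085553759412424854117077485431811457770085171545047721824133812217252642384354772707623256836477198531717752151912871752797932613431260917783208774640758960998066352460156545976754029372592010224448052396511303806984212449605624880183960141844982611783033159046549951875095616282561585757349380977104737608649183105251204152291121241195755900369724429763324519383300168763332497050031388220989893756254488837686970642134170678105305205348090968370325430688086512182637184030107358572958314593457001596520546345771841273997409007647593069921013314707037957988082394874235399643640859181900561657131489501424603082292324615492663135152412856337121054423110638236051216425981374077813624390577015910589373507873011003955450290057645028254021138382853),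
   (1299963624602363773081246,
    3814837489350715639981348071803817248531499199486118613688680273107031825104949258898701808812998327964089591287153899563102115170771528871800151005264525429604995709054468649436171683320719559194592517756002069885847714842810412623543699414384823383123307335338160187331610172749570499641728135567313003447565427521412863015982474450324738415905384728862123838441552662286236481874106691097629927396661395747134792818722147023119331259468370920057749016393235236749686298002979220437901249490881659387782401417077935009417010883000274448907083225786334393863669983346693),
   (79359918470088906398,
    114141218500934161042561568434873791920969291031415487171796107166965256962890875092492046595284782680361189653468814411222694715518796763354866163631628791593779239991330476247022269421031836533579424461873854504892654466945073692814269541718260619058550373966886315584372415985981104809170404382529055404971802546837142439122654402210518469274153366788471014717598597125),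
   (79348839790927435422,
    16661529033695684232405701083177383185659702771564340757628051211432615856512096915736151100209884209498062325451376014324584276404877038477611460011593107364223442400906389209148018973269908795849379256447248317562587229323269),
   (1260922666780641415741337017298827447090430342959976119444493155610380227210358806833876,
    263484424717588198114593122415800682135494570775142953266076712006963541001804024349796793161716922677825218316667298700932700541589364277253),
   (4843768379102878,
    5043088373021576498057613431096105148256661304685141625577327456377149258569299139543186024539436623924179250784541365836567445007106053),
   (89076716118654365106,
    7239706471355971446801438965776),
   (4843077424830110,
    616085708688512246569178780203480167753341592704506743227307964086003157870340692501206420320964679581331778258690891620231724997726460320016755207194758319337368967339616286346961012950862191518525822764706606685134319751448079710406088010870853263868046796433231313426797060976858306902501471067318863197512158934978444907055337616631786410404032184318116658075617573690145188032860886184328430722369439518147541210739695112439302499828938541435201961951355651673730315203735638540646720659489664104637893397247684821613724717274469882036657654136601832666372577365365321519831884143929641973769162225267772364029957),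
   (295640159902,
    6441709364751577109293031487368090884406278182809422559492640393478954292873436824977203850473436897920286725),
   (295567808027,
    7228108152909926702018336238250251377246862485537689511191597732956672231233076547867270192745976588641113465367707294604263148580655303046357127279163516072071289188404127806563555591418696412670721945800018852627339990297822502874199484340900635910522803236645931449861525146735863483042517370298883395312554265535204629776314617098751193800911643196237348210728894469),
   (21298440921958241239704679546,
    126285302018416487669565866227110379525),
   (4843077424830065,
    73897731896239690224362311936137630407219479625848266191989400355355477128459987029069790184867396196667774997263656634934448806895810059290554618072313075744243717),
   (7468374535319268,
    16458527130416144334205639036005247356288237573),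
   (2005953434337105250381304,
    130469473379681330254346880689474938798511006810117),
   (10415505715268227819548652078239891139559253069771141166202,
    4732851358773070130651527220739279197298667865261602792147406609809413),
   (295640159857,
    38761433534293857296899698866028724603611477403810441625917133790424347343963096975845391714387487949073233860321028864489470929463607919062437100140531746927847677664335518457667381428207134532758353613223072290264489052286122181989249468644711053409185923798619627484355254369947662950748983913337280466499865220774503443595912182999680713647267135174846414231767430495004645070563230289178867176669755599918908696475033995771470510550365092913690057960921484841746910549462867131526777395723957324780539084805),
   (4842706404857371,
    6456895731542834293019771205421772406120324798609454177802925821226397590067923903032225283927718757405833356914015609306313577646638747129056016232443119470651861911038285167474053972201080258635071465810828579840704500499349509),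
   (23909979244134251743549142132,
    1911490239734184945119004779945890395848709),
   (18044443,
    398602585714803173069197771501650653031479912912620697246313138872100558455515656271037404044930843622317862081578420263973719072812416420508475294222533221886023219883032064695365534343788342362833544528758893388220882059016901134927186144228742325513828177757126864709819682527254788557484703430803362666662561526660797316391595953948497176150329836330544321384132593279920882321377652064207291641921740547979202834131126703258735133605665424767237789669667103127430194160223563020390713117665312904111231864064745546654547973),
   (21297904836443511414532626078,
    18231553031753409525576569175465830703586222133707643300190122888312793155081071849083641150889353706035898026985228195247380473386560392537677921147737473343292954373824278692821585164802517309673993978455151576021811688683547693589571395176222087635890437959840395556639513457834813906173821246427157813994963157242006110920038540937651452682039982923126525072866757290771629669516788783346754904266633429550352929192166158605297005479370895436329747732003859232567536987842317056606213),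
   (1299920949489960415418014,
    4858634169766791492708041721157865813253544315787196933638398336128339089036058170982234409478589029475900774373665040659112393855954137573247151325930874793417295000248222254500036081807252397528597932232997583532769662861317),
   (1299920949463572136351390,
    39646145605009679478220397448559145974129777854636196598800471869628743685),
   (354365345005,
    180351186444300),
   (2362122836987239410778311590134570092135467749913864159900203349952494520836570378547908327856954737741462055495630282952332491947442641529088639770712116265515265,
    10741732298719779009455628842414768327271439695587216793335134686274354089504820648914624380266384693141667417967590604070629818313194648246094564810129160846171154673825683033952411098269679747830406046008106832491452621746413980707683744473270654985916897585088557114181792226703207275719714838064440622463548993687314651869220073957161881789850250238425012320035500510657694905351091809026053),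
   (170208888455337745365839239576331267720430978846655859635085070110413409815084563744999013842135683304007988453736163258693787799798294947966650665486768356640494286048224172472577,
    245481223069467460093489772497077251775069384205238288),
   (79340878263157479070,
    5750464848275207292093314719304677517292684300132461045889803184276321549098583761505342689783770762653148283279683747845),
   (1498498872442,
    1845074877874181),
   (11106457168935112281906429194331719026238688627056052489245955702443510158447011237679412874390963645216935394332855123352,
    2613222305321843201399346344307413647508780187617908768461830843391061259171998071822684405930884813709087795368749969828481577391161075843346863688828761556775374305539445262847248695930649400731333660590835290125920702390798393563223134283717008756030163259127782405792514864701808185383569689454660627158206712616563760412132828348333398101384530364545418233744712487644225947184764161529524416282629),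
   (819726218420,
    1853974112051212),
   (49605054327616801563718836765284312701438083254106765037133794565704369765222185151708548556936008434826149395752,
    81245436243728698993308414542755747010574510060255415821945823275833792021090092520229907278463449955767020278828519460696089840587669257091808877477893),
   (9692345651976192367593991708,
    1980805919544564244398755577878),
   (18828029817576320555863029481967509535192233546334583949620106704266564044317288226868533907641607371624786344326,
    22933346044516612083613321838603806601573327424161808332045025351622799366666103900801086660572364980991511170419782378442465553992497665940099796419855224178511181297473237966927698833296203694302080743834642916260287384345191777855539904517),
   (22604665218742029651857586675106114213898773990335520398585372,
    1552155386154375135739948724591303537587989411178946467131706795081465861),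
   (79340878264768091793,
    45244921874940065580074913602416468025959084766279575645119697765687164300298819579712591064437615797566124162577917992802224343072952585518621604341430970850809902823818826748562581861887652190896805224903944909416820132588371151970631483699094614925646372701416309208454933134777617649624634640804114791039993097220222877786749094038525057907959878204531836313503132275519155709204993851666922799243210090741765),
   (1233654088704555881569815315315790902455204108,
    1029548564021669555654687743156823416103332),
   (40424044755243379746229461122266357739406201195344330157276098077160966510765223864133049426697396680724598385727446447383849266174991960601687435585745392792340844216985388013327451387710415723321494260390133372714564,
    1399222678322408493731765280615173183878601735022101323983561890346050088353024368651916336313570061233541488611929292729350067988284049915478044610719121149630611016023559607783832416249933262177254617371328056237038730027909107307936409074672520226242553839621),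
   (551110000053696963434320499388812330674158731710716107027351508551575098831818405176984626781009572234612857255030671566162809579035548253877462986762081660261253305350512870993139458019851035538117518976369868999238435938405080575666913606996584436176048639082052,
    8637448159630889636239756116397596767954679298386694718310133808012107816429410625361103616707156686845348486087434225757804238305947409886345618274064619667461),
   (9029740489487765272585678785046762435420742661665610646617399027765794121747230786346680622153773118629204991582384888460510354224076272057761057203149677254047563941868299206698432335297228699097823248265678894337313429376028846296076489568500393261359810192353410344,
    72867448870597467090567268631702780471679536268583704957537672067180733532206229371915700099172275626399272714339036756494929852460158523208008626500406843250439459350836293629022823148929696112122367452128585178637550216014387725321862191597866796633768667454689481811745039578198233206755992377200082949),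
   (5802533125957122,
    51805106010154283925509),
   (600153301186870859322608634820283743519720314303742829313081339156224481178241322770250673389623758061154983804354343698299121526637043051905982186446827151087530484115815146007216932267446584143455374575346954311194000680,
    567441325058073124293205176804647244005186581589204152194785116825696379030149861076326424903685),
   (802714627622,
    776453521997829),
   (4842582901804045,
    32018056802773672723285533714437738134791723468225848062033637228729145328561974031564009170804632553084515290054661),
   (1299926209667586533316241,
    1209582849970514643125953964111324569914817857567405939275472175109),
   (4842581828228753,
    5469260962449003868442937298895427952370414623016886007677575102545457401353601029),
   (340136941169,
    173819343396869),
   (1426275315530769873839724,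
    3615527223465215007425399226373),
   (295575407629,
    5098772866305613243299835115416955880151162167105450904593070680848689444338414925043362516360275616288269970214256119137811894514007560138286827163659742478572586804690547225758946959764872123471664024626421550868475336616726841591737481361682873867036305921802301379123083462818783900375647348811781265149299288815719899360329186716068287436384583234054148798385905878589658743910040945177333484731465268255165926726290414135303010943798695967963488214626655258391053882885991691353854621561686065129260170651405254661),
   (295575243789,
    38991183782603044736927668250940601136909652704801556107046773268076953605),
   (79340865071682341890,
    179120724020602676315581026687460996418565798645379224746054999764725504540677),
   (4842707458676369,
    5121114127398221347026343551902262440558015250578365891561845908553912243158384645),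
   (295575410321,
    29849181470132644736937022132890069992039074136030947247443336639778154421496091464496556687527133307042609153188639099961845215502925829),
   (79342918992688974850,
    22762085742928859881250274423286680826115616520274030768539076120304676781478278514264188121120773),
   (295575406408,
    3789722860418575784800233115996713845568651277742332913883143847639161584032558838531936519445935613824120164617820309822228807987002551387467207175342335129451885247513488203087706738105884229333111427754042195973),
   (18040491,
    472520142810192687077700633747303778443575630284891805062855605365378197099102037824828773161452862342260758704458558341187239941),
   (154133756690539819592215078059793547721637791553664203811204575743125283864158506608227052065624964774978,
    11011557906567050746033852475490909858738483582748692588197107119422368294780517560781650849334907024548479982649547251530773516563522730493883443109344916349844523866531638998253167665518749954928918141708560941306121839216289565881907130596040175532932660630375017158002475013),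
   (130559105824854218520211932877144948158958445786858223342349674488676038855132788993,
    475631046666792294359975532567188981560241320340838413830493739716225275902218446286032641344097395112078043606916715198802093696206712993629504678709411578304042666950661),
   (1564406619731991697728674,
    708498270170410488775122956),
   (4842704773695304,
    8573004998000252129051413369230706224938624352154522483309471075618264806057933076004630108331511174381163268792438312841627131327594702124476270661018028217786925702854699380645520816556463927430510800062899531488318278706746021109694469),
   (492761657064,
    13512329982789091344),
   (18040481,
    111907993986098642269322998928399917458587540412581186972409790469),
   (4842604915706893,
    815272650397127336710428840381121923533173524037177369173068897840764847567838205415263298605349543578860837174989840003978926111663878362960784421215781034310776924536837),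
   (4842740744637453,
    3622052866974593219218158985094084950362427493550861234617630835231487563022518579667365005336460164099147467396256759813),
   (295577439245,
    14937579323353459408416215043060688523562552292504511694735340609201865628122777719791740436653242124884310522473211829533511640476830251077514975353018854590749147830956453996958479836193106050824811855296722889583765645224855468464365171903451621966954969359126860878451269391594929418914021078290102537102516760952589468464921246654035714939054473852911442391035310486339488711748506662620926248105411303991683448837),
   (295569147687,
    1784783898914350873003699807206353349951078447683612154469696785177344038375302986779531666994301544971179902852204594146196281269714132700166584365269165657104259124122214767249100769593243613327103007712027811649155104773),
   (295577438027,
    1068763027352373937499316411276640266211620805453932087031942006910682709247950451817972236716369108351567941295938945725530713966818537976819822211848131656898761499648393871907905179756157144041732825302564869),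
   (1847475131979207,
    8655612709476573483543238730406896832769120762407086637061),
   (79341230142848193998,
    720868475966975629542788032424295680817936193586929275606831910999579350289513779542277316082192428934215350791765483509492082758787803023863335925961988938737335636964874507714326555301916049413),
   (312797206772941135416226216070370073579515935947665205163648816573990172135998326979617,
    1339648455840960279176265884683588003107229635767353842403448145455687051981192426502742237292132383688586977701122109182123811375698806435317836343753376196972310839457858550768038734913672033208203165044360563817347387494655690582384544937563028627227500646079279672191080928954745706799486602516671847435026072883123307221875145770369125085070232170462633523076167914094597),
   (4842603573532110,
    135030328466838927192242423372392625392141325863616307047517232071606531273646520164398094511285577562287513301743601653874351377974851755589111231027352350455101287967955741806520487601795719028570785527190510647172382221899989864455076484068499304804923500827201226737756381146411074593223849539099995239392853051794751197992762375694447770527470954970503935170586314218724712298041298743466039536858233569343478723243998878874807462995238992416511736654323646469),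
   (295569065767,
    805925598820574732951442421312439945897486259968038292670801265602201010429023710626819628806755047714450268712069757380912277014342056574041018503477129982495525849364436877436641746669998743097433315601907215225956383261662512250513131339400004776268753645350537240717247125795983033214027737258865333586740695618290242275480145342240219332998097226854102527153430579809195871483756007495755851697822050222697987938092149450283907075550660387012107540497346849479976919853211132290492661765),
   (18040615,
    346182521758911904608291570536009457902953670651316127230257654719577684975636164032724997),
   (18041869,
    271381492929503727622477331506392651550323268486038756688120252018886113949401018938131560088746630937378962943430234566205439130298099824831479309608304796991285294757098590644364465872692907712179980555759518364547505443455357095728427066172482545438919738810949819349642416812929857131104800088683980362254843098406653030393180820936321994416412407455524308601461834341245176192954907546207852968009521683491695457983159487732155962324329817575624313377628910589950594306475278900854159809027902325114620175015242286754381593778704973259133365108792415938375845970535852471675723258305408542359934637940900382635081799370142752307347509346985148027294839213958869706728217661379092951223501996810128803653260703722747547767692647711675133892279853193624896589902433318875026978241057420455575557),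
   (1101,
    415889587418079575911528355368184698166042455140768036142732408801292650905450300647527132119945151951188646172156205201819105294813359967895913208190620665726132086661900657383896330649982711111155806580844298669826145666268779843571917140081606200957158127805998963708067602303291778272235486049606824853984151331385190477225723480169976371462231662312599077605333005832474304314307526866679129339034811461694106112046868188645470517659439957409797),
   (93756889571117877252131914586808934873944,
    70429054987878924154708377383615014802491822542729162176912761682558115136768495770218208202243448902533944514639498217192030213),
   (18007715,
    1910312960962723845),
   (23781147533330669780126177780195153593993647445121849851561682636459470883288117924766841682018071426570679059992440070139238245088616,
    18396166453842216458492966028710152556153314271895376084907596447155958401988799483016320191176362297400613326455059741734846366078731201389506553587498248697005517139919566458287932791899173543294420309635194667473330578781576970205851300497872826005271438178032702389715057413355657968814012265592288208768545532359712998124622909285573470917924488389299002200050346196276357117993221917082176616218857729998456942663781400090639891171576764331309118198666402939903874231371217741750006009088662739113679865203650846666541777243293942418792356502164025444058418557696279186852895146531907495589540271266909205615828832442842210232191825043363904430850191655183667351990545815995736902533583340652451169981879935507558073316387368254795922287164484852971611012481729619455990377688247441870247626204469417498344748053005741600621364844338350110164275762604084671152133),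
   (3879785065395825780940483308528114066645004933693376608620100489573101083702408,
    188927848641814886109479500573784975987870698162443986595368655973003887258732901980423597776435281925),
   (491536733640,
    272966567184110778095051624417894876422649459900421),
   (14453327309748252703522657269527804237547689560420867853445911087754962,
    4161391557959555731167817871024492266877824947673885553984094132518172723561414162860906052471208151795480895437981976685461803634502493662733229675426091186330086194989566140767916622062214293018884866069919534760571421468014932852237112628850270659998380079238493670192694830694299639454677525394698699039738130704879567641722172297579270291390268265441865280651269),
   (355706981602,
    100617532956442605060304854197020502951437055233994053924468683104284007893285004472356279334675283973),
   (354362640167,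
    82640474773112466278795161138076185647101165190874477231765583350331547946157324101510777659986875882395313159012058197524485),
   (33775781789070155664094460513456386224300148248022439179661982683148177501549906688557661268,
    98990754038796764434224863027934519897132672383496869136133706536371419346201000960200723006958469125),
   (7163478991102657128432793025165070599600661999157793078150116512511512129214817001116694984,
    13152222658630079890032418286785443972515122164875983349422169238807101834571805073394358949117957),
   (33600576422618593690599355763,
    1540844640738008037968635587359012521312272),
   (95123540883149018622,
    17375745981705572524099802605663210677133591498387774936134128361508256294920234453106155445738165538290425846439841224274579109539632872855863672692405568974315255776078872543326235424680333701825254111162439650138838792194866010497011802431932145605501676408163185344128765911028361470000461917937715666754560180618711620819497675401177909395645199207569892089570515561377232858106772258723583258909605893),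
   (5805880180856263,
    55605795795368395909693082233370877747805308308172181181581330384294693543455561942874548842507391837702593041596919215790841509226318882173213278345408589869060734620645859219983064898111432498240296368679280605684510170621248032422959383613968613084389850336871094304585155198295889062564488890182977625959040286246957757432463365),
   (354364806599,
    114564325294720369690516977719850174907724604976812809865960559814802326455722185611600175416378712193487656641887574965267754226544300361263948397620674789889184174508184921032682745549157418246403012959161727586181013242390802582579661859330241123177708205493506548347644587656516814781666633732383228261422589890908268453831221345869935458789305515384111109),
   (5805880180852603,
    346112504636527819638228244566816769223489466818000097903598437551921260093907964258864672380039475686802566615325078745426751368392696783403117868566412017704010523497938834091298813463587833010493631414890993970186845582058481870179808735873460915438891433989),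
   (79848338446935699015,
    659016624462934431134953476588518512918533),
   (354362804007,
    752561246400333838963046781135137775452669398441380914216829401402220893378520623571605948339197819104197488411059918249985415274608296123822880397169788572772835646550437810466209944983480387532406183709709993595494724634938389012504223589252422340998861480222177503209552052075207782194220289970228354826591787646996605510083267327582563820917801233441192080361369762922501),
   (394517045893484690544492339715336109237451854205493736899507450837336640212074093018741340034895897595820266,
    1064491968328332809759962694133975544053921752791775670221048908050726788234622127541362907789020364682625029),
   (21628711,
    35579180011028269024936545346742087874129641325107094993822006178854722993696492902024878820719675985003483730420147835623469462885844061722392060256430210205595984576649582282239110691706945510635808274513313706564259336486132224180781536974833310834156497732507803811136902733055068603079314911803149560217548492985372145471130137774725371764641492270554942158799947038725),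
   (28002087,
    325983603977227793972753775987931122021233781446538414228246757381),
   (18269991,
    707604053370457875850796234312940097710398773022350152050538571688782543786449171543706607298192578007983702447718279389253384159436329742122140594652379673951371007781220419746978880659845858663046991357551223341099467152982299163864244826506675444116324201124964444531992857003647002487712372904358592927965616349506039934021660599832849804271290828539618931653981236831545075086780277654943624945234114263912631190868780429019258738009425848623713388554502754568949737848837),
   (27805479,
    39144909112765251997596288777724056632112988622048097551642008208175691527831226410893111037046859148254402828312824263833968785774937485017753734673282964920164589162455198927971514676768444195641583906188312943061722995152231529676501441435855270459413926769485831849522438448228234099480458349681773549463966317427591639443951646807142958689152207684299506069220743806212174520229844166021023269274658644685815569055749),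
   (1831,
    16120711206181177629675334310922781426664577597187481829319832268115854608788386213805609310135318059403208312566874948894725),
   (5819074382638667,
    86213971721940724895042488434808759522469091635593137560915193400990528665869161301601039428657409404924563035912788888184169607794195180075784262033300913034089618004940440877021157839875432530634011891805617774792784304588528069752754104914184675454005983733529320979783644461136716541312874075422333532547161245208876512373816331094146457047619743497861017225158514583415602276456591786127684957380630543729572609424840035597429009324543244645258725574713053645337362748473689689948337316131715677961578286261340228778028451656761521977412676011413630970534737034217119432332214276598052017113809950212499546548944279830432893685012856028493158598562439850253678096300331317740616174099553677437846376965414966446348553731367333995973899239272564236145252311858350876688048605780929936570884161541),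
   (95339713687812189771,
    146496109074389485145765758150314266022399272277063216119002131876369033745372740901069785522870299181759355518676091198694693233883855106303155554834618786304371992967407628983584255913036088819626912539091333433674140694991737828720012285695924754539672581918333401824808589323024399105350367713892656171686208188093338963157562062644735224371519719604877741276205901373889462883079815909418284127999777663146857984873745623970109632451270973790990335601466222077564721935473652444978167047768026127013278825511897613651576750085),
   (137654526665051192324,
    141683583553960498061320),
   (5819074382540363,
    2978242498055844156557247419515402376153920984351174270365756291444880838554981304672987512837),
   (78983345974985767860,
    57252522762951419589566414369130851476976339663754103054917786784054064889114254245893),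
   (21201919487195812065489239025,
    1074891984342363057790588404163291607794141754042712069),
   (29230925,
    137834385340673842800033808),
   (5819074321772107,
    189141159062378731172097176349805902687930967841569198266265848868187738949996538728525231162072483402341052971765023667498609430427290194050354554345257057318377731336283349029086275038286721862696110807086990756958597266222595269899459393543522983731621490135974542062543490456733011979957791355299542509203210214450560849043671826212498174488636735202609620903533951309342306258385641783725989608303305909193650496342367272965),
   (294235892500,
    313013853938543368216637757379731483458765322350226997187815324045474200158213),
   (355168120395,
    583956034555746954676662777680819004366596845785205913865869996751090773946083775116678379090245853970218852421603220565659801764970452486185929297487416214120828258914300264199652025750096307354693231728767090363057024068257403026089964910832656077438374680199894158415672383757128126434720861054169360953968495776154303796121554313530181025806150439982635613568273571300659477156952440325044186108401391362331349229492761732151583284909132760428265699062637711794655032789889587141315593828676475314839374103467515440704846751340992107097010319626702348814738840504605132062725),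
   (8071925125688194,
    54461113091667613843461),
   (19927004029081419206868022343647857070676029557512591215857339719972599268186910298146159618,
    399336029413333555656136995342694257096964225342112658507584134138590597123720115318420133682079971927318157983046418181030901055493),
   (5819074382539485,
    153858593339090615790147883971886216497181295451047917512223659231762375728982918067891385948167021310306279070634072093807216172122310729684886212444165),
   (5819074321765880,
    493690910954451446247320001889133217179091738161467973633920728368263214567693395253221002286030395336202323111642575744649035215747200041934033118166866978600865174990648024731550193727475968408302942243575408569633844831334801740680459490212530109136122373729156556938928000443795090016780327298863589959787555318144875251431146408706362725112478286438030844060583496727220432591668149290834319857627530440346166840205911783917504820449095763966913234318960290753754509010873146489112506849266858652424012856876895690030372601918855821753660366955329458617242621625454425317326489909294545371141),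
   (355168114168,
    71757164730238446812876880059692502529162843293648364509604531986556070656386048110484347353186020656486290724370201888711080306599655304379131013722774881014719753313716844993002707643922229191013555041859506222322363192738762803673752934435563894585713192678920928276290619220705459580555354678596751671736517912586662257347658046271759174843915043626640294928189818647540935423479635983009634073206682026135508964232287036095952019269591339499525),
   (5819074321008507,
    5677435556232944988304843078282018919888495253268732270249075163736178363974131593657781771842267332044161869073548610757017088730533912658016342848144145620301956092276274908296604965353968759878178504014058362406573416790197995327959094633546844647345559005874421936615285495434902270120631962071283365078917406340910298754236493722645228094284460667147030439724496504658767842844978878502329461909908622792401122828074852514814922166280909881195392130130682066498912276116013061),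
   (355168110459,
    1422146314887463901016247216627586127799638396538243327816603871066494262424775103426097436636495791169172755092750401886695624430214544457279409766212373577518358333149979528337196239563818736713024075364773145433858697202186739384325),
   (355168110413,
    1283955414377748950986014486566798751602184161566406390350804252227143049663481400310714135602232447494216170153628388164474960630035738037125439705929257522931997504890409185561553289139385839504842624126993895630091695672998474126778469421349931739805925948698040452603956641975124984863156556089965488074366221627256889773793282252174403100033575041269576183932662985056581550294846964713967447614013571494083458047230195385941352614712734711817433229069022382163938559632180023760668586928312464175858790600262956165893536174593953090752794645942632453),
   (21677741,
    122036363660763909658256853278247229657565264556587341740698191066320338470094858100637197600144896217652510103121185269527144063303444186939870781548507357861537648524202528121208533591777589221593328898421141019901675192838279353843136815928027703776074896053999274561368864908873796100911911903947573495235316013045077207549083653),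
   (2017765763872095373224877,
    13712697038580050688803424804697591044420078977092457913074605422844811521340478076639773415785368265149307025999789335784145070125073945111560801396294659146035770281868780696200503296861311020903215133282164834426231511143458308385624112639525676875106732189332703566639709918390465075573272685640207204357521041583906386086866539684438237566148486716214879774330717868622697332429317737818326799447274037699787530306443377598311459524722637722692922345625188381665645839376968385210724794199609624397810465222788891284331363452849763220459819488791438864312408884283758355787642367948906406374362568431896271848931763071869752217792764308551415214761140673949074072759724139060639251431429),
   (123154648673833954221,
    6407436250761040041875512340409559838838887127743661125193377878431948068033750092166829759950255537193166306028311385920540728357081805235540788876601440877996291539093566932342066486360799244665954243848375803850775120193724786141857345146333367737323711323024595739623529359326738550281419709151875568941561378083819985976616394915070998501797737245160148169620858618355036292252934330932902640331395841807889029905469240427974137104834442931496738304476262405224876270893766172980512956286553390296373245839379003685064497812752062888710081595366271054311457984482048320488401502718042264698885),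
   (7516763224721310,
    2151576269349334100709542486792751145330770945325617455054907385007993610646750815041870923679017181579713991173689263296330052384983174313414514020463609443283401625875898272806562881788252896465987295361616787394420657761675759133779558982053465148120303867401652801925017976394189152432900649867185156000938801888551074066924087482040340546914446294998944877510661),
   (458786817915,
    421236858674094458139464414557999330126405022460929785248944769144769075549628594405824424743613067022487879518214745710071295985293566906173195859425344059970630377165099453506227157878965875371123001834694133443280187004107968248329930082145345082340570252614392924426246222912478192365496973624393085266719757106839895836840866961975524994179423937957433954548220430063154530330641710644856172145281707573627857720296226766793988311024655585388848733677607843660996473908266514997948423612895832180427270037896406957490088883656972091599890655029184630573871042142769264969881070435128844738176707716863028143541448481120453833095586335488437879930006650655021183534339216427803298272437837487189493148376829207309606665184538608354420937412428126965413685893813744771437200580225317920542162949),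
   (28002171,
    21203214048976832940979153326445543972339660523381569266280730086766379024),
   (501796597323,
    206599063908016792893250079556002687279288376537251845),
   (7516763225303981,
    1105595698911327251080693991347860554890160140978188309417404375464013806121306835206277365742323918111619414759180637554456775856869889934502746655101761615734551749148310231951592704868084613585444996641290778871940882418832536371205),
   (10466479660348257138259651293,
    610472143134439970985637928446387809744126831441866123166976631729830179619672720420831548141859813509333922165037457382427152606785952508320680356506878171191531324732711235138148782724103703900984118674553903143550643335637929523606862203944899737521452032188754465055333797121587367101767491278066742386042810020247221867871095424008669129885598831896939957247023873718732798125877251032178738993056354053836086159876769359403705040901),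
   (44496933304717447844057348088540012441598387890186375786501370498577302725583004167996192494623413686728568713808926115980937958374449344188841202,
    80332972072592316622963262052919038637925563298909686030688718358718766265540440641737092719928700947453508634414820951695456714184909501505378341552111508207098527639812291206831001569081654687277372276741),
   (2017765764027002088025550,
    26836655594774316160253233278108083615606300003920791538265382845306258141866710684385638196051818042141535984766031693481343267549270976351690989009449571891353100999585356477327572717355932258053091177882333525062489738450565286404300835881968077430481577507832730231702211111129581694400452926692786181),
   (123154648683377028558,
    5995803232404587538565319566493971416516768906206386771051374996887406886088647091358947978410657445559395178176521596913523387281355554760206790150550243073994436120833413449918960021741066762258686435426942784710723547286374903028524903641383330226438563519497319423717756475277345685509),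
   (7516763225303773,
    12218789590442456962256479151411185263976580153966604917346875526527183310409236236512395573498121063452572063957672088897168983681187541306757230035673288038164365973010204329703022665163802713923257493742673451829396092427643172321801989058225795163925461629223153721370841487663351582930219380310237932973449828114589860065182926148075503166537612259053541550431693575316269585091678970128787891322519172547604990422061411980915665473974173701),
   (458786817950,
    125882120349379074173994439583004435531713146078566920935473638104122920379996128524600943415235601215637095467945163172340217114287282071625143475359370704992941029156356072376111080484576886307810053580525638034085428419589101920422550898165508171323125320320676523016531140566909447117571977102977781558114171385135230571407847648103730031816259289703826611429592509781458866727392347715947275759643824744823200172610801068547025024389680176201109986730699298283846680200089285491785852615441851067484661523823075960641737840177339499221337098479455389151434960187224091909374404430459794585791497604060806044667036706298649508861573928892377476837262749506923529626542967750661),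
   (28002125,
    962653933198329489561294848365020694965987652090219111736817894448887552227728630135334149701002498798527032178767258155412960886364499604794542357606730880044305120173853081808960233427082977178031818495358069536555719118175164563461),
   (28002206,
    2383562228403728367920926722489425976292834119172450706867636028316654946729276719668536376256455798475311125487664429566473434822686711475001616600028245695510572897255871287438725209317071585078586959545092610545247341457685513939859822994724058572823495573509),
   (7517758109488795,
    22074035309252386692530848365689806600213540525765424844103785900028182886543112568159587889978362633521583781319435311587081698667935466125661411793734982261380564156638326396475801984770780346652260817571050063666782808422756555720992382819602581977399911940019146218486969194844296621009751007384947297352231606159679104921763845),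
   (458849909716,
    3002934815673590883282037680131673499012583750806509062941805726606042054742437393212133965840),
   (444885325438844402355643589789389378619873269629893789,
    4083335294655736082072498198055045547304592856701265309668277476217876427938037891120397448128634771623341933597399239961318407083365381554098243558449996751598259988370423813),
   (5054275767517624367307983713764555397647343301762397216846496190018456555026602796294035468414932435562363337069325335704,
    8343767478765554189333509229884852486758510629223311955855464075811093097488868175592021527105377713397758079554995607914505855161426561351879812217726296993591141983225580486849430571920845213509110103775885272384811172513569585801733098709757645202135943107888385429045074561990086145068222463158197080414440521733),
   (7517758109488792,
    3845053304599304967913093813550747643644445560531707058348415598555027939958756471527621026126952755531425786523290046379921565009800337686602851560904399659176251069601131639281629766559840465812897106618413725000948422291797305757158230307519060014232033341253027139104866777260896662220998484672945024304157470785592674095563187432515335991101595173165920430456837),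
   (7517758109275803,
    2111514809795534611265422757857928432945702241069723940242899469552955913141648990998633853965770533532430386647259573678650033808333176346756449850862419614879613866989882698362617417803995679215021774577550030651489973388561551509750688560376992465014044885512422117809767383644108647882868162177909306530746496758673521726024263715627772622911931572192697391911299137489183771536843510407675809261726489034863800520892962045952953544970494483678299438106864184194706888844554058804921575974618033772205282934558441699838366106318608595681097559953282501524524421033102126408233017272355881170993655042255338499711415876288327218050398765899353434297340883825195806258348656966022787781328254194805305705259339538884227643999470176308819339698634757),
   (7517758109920715,
    831350753778738397222162861405192567601124762640584159904109612985745631125911150994002320131974722886876910929854475648194711292241902881225717005854252230384220590542049598831086774023790954877094344529995925407430784441850065518704130833865426275234240417345923672964981647775151822635359664656170409932952471567526453364251597735740227421423646202235585724238656713348695073694547973),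
   (7517758107866776,
    1203756147672599742446817401999338056387954224727858881851947182607895224542679489980038281127238432375322524890506702698761868925845696292527549927350255314753405178796050969702336414887671783679216180972320245139269235590355194169147319846506308055338227792155404494895704111484536834958376627732485),
   (67739368144733415540,
    11656475286218039733),
   (319786123676963005371108144504945,
    144655928250408501550571496310339045474970288726338674306457510440600359438821250927882555491802426210797604748559393844436060854795526160784237197918213),
   (458847540888,
    476963659039219842296884818105535075753543260519476609318047236802587503685181878333215923952932309125033602589653592361014876826210889488772917767956099600237348579451651214564363825572873828581383279604159559742262303474106685736916175164514777770401504948783816103576390292849794512458970348519134447535314140223996470868458939826134090590884463342175377590459873007504640990892351648906409075584796622790770945250388054110943184494381501147529512684999292898922118419335820675853922495343874785332955080855710470313826073595900223594841636869),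
   (28006039,
    61288184361004557879789551088652219339298490469873876017595450676476924615184730491482042693419173421603436061204362251492762988636717850968045431188648279299671795123060818165252507326620800936728741177022793664902162751817607722916192198558174838652933),
   (1709,
    774443203331215436667203593301581344442854955517467042452176016541461817257412715178283335685),
   (501759946466,
    1129139286234944533951892488208),
   (4847501239774644,
    490892644346147058949584178681051170498231725870716000441392653492614483212953954149335045),
   (17942177,
    128161798174662640451846149),
   (137510411476975336452,
    103023926502829845274632),
   (455626315419,
    1196427480191316357245797492537912255457842188040492455652355753893814173810049614598613850599559362306398777087299892108451401023985357286519744576703322731937140967757672621954990984068418639059853657400569095296677974040710086182517987033815317392860021038004565974716731149594334063730073280857333425635432950175874415010100928046555145168063194751354019891144830459889124279151505532286829545109799520085874154192828977495524171062468800816309841806573285154937428070341311257987044757129425675621314330567768525868305275696067896586306921024429966445141102900658739313644024391328986169349),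
   (27809223,
    50639758431177685501339131339759791818122388922368087985428924821382343385780963703375772527018451384889574661570254384167394041965814045111525694395354554825337902627462798154406421699443411860848434267389330043769163864055029511204322279429),
   (7464337304065691,
    1061877548813635269999817659084277413757219297987183013439916403621823980225885501755905572075169069828745640648890533666614635623887551735416904436556062944680449135231928307063647518550962609401429393710267033359614201755418358692078860432020121027165903163169962164787152411324565681456455319962695307131819060589880604416957815938643703298987759773089605642071573402474780800466948071890354548287529550478936263050903085807097442740785611740769487471557206735440339163913305728214292312143276218875897576249542629038122319599823501227551179431006248388694251103915371049496803554296556661256674808817762553683736630911439227349694327634922160101605109272043495728116285667926999045),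
   (353291586788,
    1477634257663885324),
   (353291685092,
    1477635357041295372),
   (455586993819,
    329180992651103019529226922993348487054686474825927433849845887041186177714958517770733751112885852491741392593774883688856397607597591769748489623393518781995589214281174702225600369786563099061220570808115113118567977912958897251271125821093477054580229892236793479173),
   (7464370860054142,
    140386408407739809656403198975525793208997897769619997405490514306300520522784600478232628732263753745164257179336709),
   (134268752120400457201,
    885034349110661336671084552),
   (455629313691,
    5046246443631317058422153534215282900855232232209360886812798798771843160431352910162873993245736969526025350160408601368699351569924101),
   (353288869531,
    1126146610424866864339164437610401149245145008242786178039212114975126339558127939691259701225679568093253433745344234190010264126378799814565601094770509348869),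
   (9712261334731820148622669315,
    574255018682092753479354254261271789573),
   (27809435,
    2097822083697502225666187682186934560467729346772641377382823346576448732289592672664277097179732208918443059186763466963536969400055176436665008582901928748346598960921813097518268333861190674545172293700043406394649927388473090163426491655795576050970070184420605932164544721959681656653810400926536058884291433962156465081436137888033485735841298745374561949710280733125539819588888683704223457738757),
   (455565596286,
    588047984423979488130342631820829641124177739372415066166766243619824853652094124899221127897132127921103138512920895205397896495109),
   (455565596318,
    271934298276778394823367247725550378389858848010104460309962565849712744023814058575540623960829987812720070396087821773080690146567490993960908042777068115556070357385373744347081545352678294759938527130808667150833169909259095432227907069223917797584967332072466481840344842503030488747956880835000238031202121160593677505227913998022257602943466369779345609758765415484124054539727919269719901773815894267561599307608204815129563450827062617708405937187997465511837072951991516033650638044950298629),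
   (4847104492230302,
    933061994295080104825008216036506541058283933506380305580852068418631587338275438297333497861),
   (13546835629338340,
    5085191271848728559759097985759901669564481541),
   (455629313694,
    59665649468734537822727654170866263301694882170788091764897652514056053477723813159622772630402039989281718896265681549629133149837128233548981588272274836287394901198047127906378141153323005900591604954948683112196455250990875508416734966593976309326007766083655469443203642322513238861086883441463435851324893653999189194185327824140150000044593273703585494766484532073452245829224141091556923564299829901640368081899941812619811157788353330170369563329419378029360488071045511382622794028004675735359462703109),
   (95124574820885769673,
    44219389887607893370778191291125133999770041450501),
   (27907742,
    179855599078495333936381558583292794051059210100481603146789335898850918780095413488185984051535556414228908101297926060755111542839024601005508305994462111237625811029521473239402899182562928953994631610894200680524599665273741188165853507179274138413441330997988975921002246497680127959523036111401432207487062156917955617055265117535189568637545380218003273880168437980556614071127453702835051123696493170065516545954083988987462512605593514536992773),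
   (455586993822,
    19411727684202920469815518493930323318752335245541301154368418562297632599248143871147489438531563635298423483702157281270845747714822085387720868382546668893425557493528692339549445925716326251200525008822956732627312547567098134625049251769852323406177587609264082912080255908779567551617705795418664433291968548024628956297549326278067551546558724771896760828818636908445012750822753007089567356479121069267117738298062810652638539923426241131834864645420858831414624261),
   (295846470488,
    620750887777454918971279439938844195209232),
   (27809438,
    61624008191093019142710683735582103059623108602832243879497327099236260825253320651339007061722985729528153966169766296160507698843503440595887151059765797629164140486959845634303335069075199009078815655128479241224970221308460285471241182854945601007250712280054340776267652079504126959332797128105992835531690353428985695450434785342477658210608376550207732218537592756839039955188937830135574271438143159012613975411377069211126727457700119173123960923347502588815489101662236671297242029235210200154878688505760793903796033249476613),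
   (218705263549295187279309735409893,
    73831108234961763607681009710604300),
   (455589041790,
    4902072227830509507412506693449760538759054521958965033544027875965347328699781990249057813400743404940147974710695816507994425399913245596345581647020914944384279783229599407801048053912192845176169211121495506306216332288979734007766498304254610031568538808024398682237115040074230445753325066471159004917212132752941301534681761040290829226060337393995452506167525715175581104840943121675206061141574639430902244347469373775377636998132587570378839267884368892093936427612213097923485966726772751440355845209881237009982028483146662700061303984669575821299889714612929133496707802046848054790132111748629318800878596738709480367646558789039631499132808482699308593717360025342828258040110950052390998623589486814274399432301023555058371897329062275432784673377657902932738982066870419461),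
   (455586993790,
    131367903859929814993972214677298141788913417303390187982867729529291554394057059046064175473712565371498741853360391643465275747064719998981),
   (455565071998,
    36212310759450250941670329827633993083233675147719594699818223455178295095450041409306568193996273355230407693633593312952525202175946390580038958097131097183451715740323440310591438614511617512860068390973672586982198970557572994633603523667558349799429),
   (29755155012845260967949451062015795115292273231298074305648523321080239869053134654688766759139727854664069146897878366860646,
    1921233865448635670132061764710484325843029108091252554271957573709748698927781999693292636103615727559915288994452082917929796242495545876752941527078945170606677506087642596259315717),
   (122738985931685471195,
    56048996883516933420253472913093021720333817860405107146150374627715553786018581153909904726150796327414708995381236940693450468156767564544361245205433432241798319379213498047014121355463493842581590615657849604728040560640092886618756333521797503806412079924849758961025158188133408648023814057621929214599912280153381160046627233817628758451355116179182185648377582629621699316348538623216960414897644233264777031030958709273051159576772913389419111487069201166947543142738408030896427333001110856014988490881887000199173),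
   (7491418956735451,
    7435720988913575654383107162914302838265531041551035649125846648320163921843898078409635433344373277400335142441440743346300667771980633421051885372497493218361994692205752077225660418594106730780761120313370437592174294455266601502513243700792796046679473446580617493499460911069040722809876115421360685528624855220762098936844277469154138712724757266474862683115227488234008696894313849129187068164663784570559182698404852381688533653930658467862555000837),
   (363075185580,
    1534940866838550),
   (27907710,
    2000145961948989660398927175935670481835098593230498623993519924678399437901670237238876756628638073072668039707699399666791082382107800109574324192682690548490456207234298234246932547037185101376255043775218971512760324104486746367013134391374247974909796770490610988644737099528711307269),
   (27809406,
    134718311058115586460385984457747690602161864596043071667704058033299924147429502654538736449301403453409931988446475033876466383956666386021699572629927328093294620853273285862214339156661798799225982613891893317734655049726810949647940984464224054210466511714282179852387977853727691383800521401520364721618412288657265180993519769109306349911305953775331012427159123485243137347149104473532336660611376569333315563758499360544820404104734532716962439982204319516323146617492436642265190746108782051333),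
   (27969325,
    5136954285165189628624611886447879554497070683991719601590689969899992173748635595074604311361913308429554279438253740297317865929052333907655348643473272726068392202391777039214499177188990408336479081178536826589140803132713477013394513100004182895671185799152895182092427494308853869916193730234545537371188149403308945071883648324893923055230093715167208286804288850823221867977899661729959841651359749),
   (1707,
    235598324710305534843349046720236568353445235979499091545827151234288711224778379425028189974429141825252986720479547892856651781),
   (27805514,
    150655513229292283122801423033253705106928088548679515478523920),
   (27805485,
    33105238950878687427574821161929787042042546544901899320262529197402079602839752263055404800208404485),
   (27809563,
    325547484036449958304882398563830520410071618150340000375103032496761464471242775304513367772678262558312556188371914976737250832286314337099316263692992384322353745431054213100135322697007086025212911968477767541288970224781194777430806445291228828994156640308409008133),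
   (27806948,
    9102855500971342320134649833598620320067731224038553510631583158988338326570990883077939682918832224377213953474290676444553281739264839613635318263531925549347094785012305759991776521778312580147870538702714729916789649010420712526618149560238585151958835889746138534242927308710199949288353831356337534118374973240796742970444877951821212927520154016564495857467309263213386181891182401737733985593298513819629019221749760498096409206889058779797941615523968645011298138331173780072867622842988182886203280795593262559342119198332185668257489989485859510435841878249996358916197680027348220903797371395177355834135514823282016482759347314532622243686073143081959429),
   (2239061241075230,
    185450574300167276443617769911125735572388550497239833797141381151321660204490586718169924533600864732857226239829142103074793301055177626699900393455925764223450548174883095764957028932129175688531355380406287153291440490506051369091116770906618198094333902375579186322928024091098694358948203303039235813489237408349457270116732229995583658649338010673043843552099051243101617301937248088892349627385683605647653431591818058030023511446297908011494046919279178405105034443086991097255519032940036101),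
   (136661456414,
    3470846970644517489303118033417442247974817080276861902288025387666727454161575309847256517759237186113817818473853521720406396945305566462893089062708061054225314550588524326631491045275994519129534876626434894791519523653820512788322140874572957692382062301015464871236845271651773172758556529426951743871875991959907278403248301577140523563080542464689529009710209156688390793748495039255991593904944235707569002381317),
   (27809310,
    2785540066459704092438958790423465414779283266094358643962561443276608698508681729980097032740100902665566767973662498236238715389697730715642645528851087398071053959729348100891266084298597282051523454690760044853865179879134419830653135341859334392967241481066493460627748759605111902870940783212569689839932550116649591363796085784893622402440056847106773009527504359965668117970175974598841167367257213040001671707079770103831631843141746298805617294172052200956847568252108416641686935095695670116357),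
   (1697,
    186785631255816603742385489470673494496170677170112228260778648752262205990961245008232648729333765043344462357538780121709010092790236416593005339458332511403915621671716787870267607515304024283528456947015594164718263446962202155698730640488065077043605547404321256666850266380065808831205087802248493007233450257638447032891402618828840874820171742781994563747724891441608021640694174190716159023191420957876511867924698493041192188907401576403758851132630210801914909053703227841988920941589858272280768150000530599657034729153355200913129103052319143057158824935085482592489013405388331803433227595697032564130178258795883528197),
   (493146478359,
    136971392457292680757543602693420974096),
   (493146478206,
    815428970557075392424403023703768802702381234955910064887436250976881581233441601120532226799506564225816761137563923478097709651496471873820941405815275020078539436257058203446276663974787488666702678460028628984149800550281525758551332470978152376585645556713696962091580180639657143328626952815616091947495493732903210667194226807140676213538821),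
   (340823518667,
    577189426500053816040802620661576612577285),
   (132394703532765665047,
    4698222336616799135538828802363824388829734550670396078522897639754686463362767264221499731681887196110100104153477228459312737118790724513482626606978272956363097407713747869854693498038157967950903097200374994336359780920076906142923626593619759791815527019339762375100478614122095871254700410018541193698215378663004819014823427108814398243440033797),
   (8080731416794903,
    1881481009136900784669096280028849031599364833287414442586025833505159381324890506373645360034894743470085),
   (8195148628405986,
    60849274730231120150726251328405520),
   (30103166,
    415694352554499091590865853092971659100691775669779965743011091500000509386635663545731879693742340574582645456435215088565684476631462913192715762377984693053565342293803087755596611021715915662189323941792310778336459561204127050396621812448260693989941658333425751528068483616127414249457800102072825058872109291591965833220736179674226878835739324573395927397596965761004178741213604841439297089724983790199423450475111101056069795845),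
   (5758,
    94623241631209368216604124661876088911096325564828587091396526431559860466537586229891196307812515845),
   (30066509,
    183517304262281362363809644299363072006620767855925869732266186770000783811146793565126661),
   (30070535,
    30965318549812605302732330006388625375369652739815625078238014147956044917690284747075600128675340315704854413317),
   (1835,
    6015612491534650935909594329263703650550679872779004466842088723497933626710496174983159714430502752153730309113710702171235706790985657700862864843686399970860051671747815563215449694305927599568226810459441327415789013939561416244709217739850400350653725074632112054573719200425016688645),
   (500456461979,
    271892206863196680119704530091265032586148417100711095867885062972323167239533795241818287644082402183385852237704798776243422117199780543345523463607973925923487125893936816584754099366357083667402647607580241995222106265501985778536111630065053465009338319269034365597014713422092721412074589603449687435101034307122514167914206540261221843689558828144737574018771422101169167560107070038423060539500751249702838088009388857973891746523875337306243077),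
   (500456463543,
    5271931700494613895691188781740995351600035337039479307319058905113776953044905593514318389124557199054028406191310287888642661606159394433190304288729916327247574289742582364144647787133284530416494001962114321681663872718654451751397776493176291333),
   (30545438,
    43625644671741712394559193276557893895157105989042569879633749460262157387636279702972332250528788572632025153695540261498814952694577482459117788235513536710077265243837716696754138469433860380685065019309867166689838858336124027437417998113824113411763504972454095432191946576341527536190420805133992547813106739087027801171290809845218999527899484494149765662613782905176612747285410496598387638571130562031368804441160267926168892238438406598529397161969713125489629805925566883163744901240850523501208483371381936997437431076041751583262774573344927676983776255676449359119494710371728487082378590493435830144911466726566654967011305413561725996030546551320252608764423831557),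
   (30551501,
    183554579044286366484729623068082762352137677691820937400565152309401392871281368439586821),
   (30545563,
    207560056805778180733843738685445509587248062041890420035061308422588749001363160156872139017527212477226134517469045883742781500907711906287677946476037086879787231842182835777424284246497518029604621355155729741420293544582225805437153101438557108874395647787107908620994705845334572287935831115815019625378253357526499329949633500847900193645845868508741637),
   (30551499,
    2371082807635789429676866649625928699972148739494005214195846040138046643608648484996325869138376957806500067464243740905791734300013388767939238085614280022768441730703182980891135294840897065487440447370532124483204050495194671665568160781208497896056606233749686198843122660532701854134445348705490974857566037604167115849874463991390486747816845429886520448991415509749144542522866227863679997587210489147143794997344113086777895310353542541422868106222723011837957),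
   (1864,
    134910386810401967636861453087652607538136188641445321967189387622227668182727971507609586447656302571948731808192667635257220841714603103481217383989720544504251418116530317649660899589368511507198841816264892135882599669023563949421126625530199242024822427636657649535689830468550661),
   (5915,
    16476172538432824473401241862264323732845020896740484227104784),
   (885929776795,
    16461986614171588461365871950152977541408888601491908467322703031718092363984836597164881138133094945145084427108731115666625277120369492592731376025487972105405911211030292331713323689403877009713967094889693706812025406154752506291217182852541900419647578644545890622253917646075139051409797910559120788233101972824192385041618945647523513544931482160428138711424224352110064048128851546027453909528892708239913346270472784833419907886962833372199459952373774516557307176104889003051237057507745718533854530761030692490564052266709752447867420677),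
   (54072862,
    1444408046709105546338786615014798927533466818456812011185746819729350646859828137974623756747447156115034199840579291625083693826624819788493282328069767273316878578412310747930558469),
   (61382797405724163898064630009512410923316561169755780,
    5136675793196325241418490186620339216463986057626124310273766519983145556347511699155235422966423581295372807575382144401152005166884887486522317004576590790967598503178317595908949215219319335780396049719716670219059662270782170162690325404948742764077005136003973607241865107636486095920824429094804173755238447033918885612296493792772428359076722601080567754952235731887613944300245121951806425093242885),
   (885931879883,
    226759386710680504677255482372413292140924215055762753897169886934871222847343540559797113605020084323386729080786603122215620182931830570718417363501265375447907112884227919530975656665101769223589126844769961791025028195109271066446925802755066582581038817271935440062856081692326880766754070524273407860222091956607837301172602486448994312409161719474388478024592053484933753962755303431081225167890264203743343256316977083314526348885165764237888584630089589793349828323047313609498785059208374130563261495461315799838645136259217020970696074791546943549298306986036479646684210383006164956758094472828095043829876633275204910351223603178923004557223324601297315380047475531115820938426479544125211878077892112023557),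
   (885928728222,
    1974150798970845009212128826459614561060884748650725529745980569114911323304480991939103230109419177091918010774015903559143738346536423429786692351271682008210757960661690653113596197927805437040017367633510642380332136797128383214258559747509422596585086454557879690199045),
   (134622438053,
    148714285085),
   (54072990,
    31753679332156877452978462515709991184980347126389703808560399409483484157495004492651488999272264701899799659104147363000191925680403115605778478634325330201436268363888032714821238304288077062757245520701217471435474437431659246730750304211120315251518216448024956421802033906435016631650251699183914095914640927010861733734052783261653586911440844346784322559412023451010171416435184204832646063367164733839675135486754888878318386038489578589134601668130905609801414727354496669058175685275788267644252069041983003054224640402143625064476704773),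
   (3300,
    675260357243622287119762760480979160209457772962067398516925022473237390902189927278782889724782153649893192726660961535309604634390181472803867555629678103486354154256531780555562508183952031749),
   (0,
    14212527152846994284678186270223641992899236435197903935634384247264827666770152395744336300623424446144655927390760572616361336269784419139820009223183221851289273151558386140185013964541052138770219094833061492466565207891944851345498952316717095842761125800351859351894312289773571505406722949412266445199379541306628507356300371960431443152405865841170786218541061)]

theorem edgesB : edgeCheck 11 12 crdB nbB 1024 = true := by decide +kernel

theorem checkedB : checkAll (fun v => maskOf (nbrs nbB v)) 12512976 prfB [] = true := by
  decide +kernel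

theorem exists_perm3 : ∀ a b c : Fin 4, a ≠ b → a ≠ c → b ≠ c →
    ∃ σ : Equiv.Perm (Fin 4), σ a = 0 ∧ σ b = 1 ∧ σ c = 2 := by decide +kernel

theorem exists_perm2 : ∀ a b : Fin 4, a ≠ b →
    ∃ σ : Equiv.Perm (Fin 4), σ a = 0 ∧ σ b = 1 := by decide +kernel

theorem sqrt3_sq : √(3 : ℝ) * √(3 : ℝ) = 3 := Real.mul_self_sqrt (by norm_num)

theorem om_sq : om * om = ⟨-1 / 2, -(√3 / 2)⟩ := by
  apply Complex.ext
  · simp only [om, Complex.mul_re]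
    linear_combination (-1 / 4) * sqrt3_sq
  · simp only [om, Complex.mul_im]
    ring

theorem vB1 : pt 11 12 (co (crdB.get 1)) = 0 := by
  have h : crdB.get 1 = 2155905152 := by decide +kernel
  have hc : co 2155905152 = ⟨0, 0, 0, 0⟩ := by rfl
  rw [h, hc]
  apply Complex.ext <;> norm_num [pt]

theorem vB2 : pt 11 12 (co (crdB.get 2)) = 1 := by
  have h : crdB.get 2 = 2155905164 := by decide +kernel
  have hc : co 2155905164 = ⟨12, 0, 0, 0⟩ := by rfl
  rw [h, hc]
  apply Complex.ext <;> norm_num [pt]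

theorem vB3 : pt 11 12 (co (crdB.get 3)) = om := by
  have h : crdB.get 3 = 2155906682 := by decide +kernel
  have hc : co 2155906682 = ⟨-6, 6, 0, 0⟩ := by rfl
  rw [h, hc]
  apply Complex.ext
  · norm_num [pt, om]
  · norm_num [pt, om]
    ring

theorem vB4 : pt 11 12 (co (crdB.get 4)) = om * om := by
  have h : crdB.get 4 = 2155903610 := by decide +kernel
  have hc : co 2155903610 = ⟨-6, -6, 0, 0⟩ := by rfl
  rw [h, hc, om_sq]
  apply Complex.ext
  · norm_num [pt]
  · norm_num [pt]
    ring

theorem vB5 : pt 11 12 (co (crdB.get 5)) = ⟨1 / 2, √3 / 2⟩ := by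
  have h : crdB.get 5 = 2155906694 := by decide +kernel
  have hc : co 2155906694 = ⟨6, 6, 0, 0⟩ := by rfl
  rw [h, hc]
  apply Complex.ext
  · norm_num [pt]
  · norm_num [pt]
    ring

theorem norm_eq_one_of {z : ℂ} (h : z.re * z.re + z.im * z.im = 1) : ‖z‖ = 1 := by
  rw [← sq_eq_sq₀ (norm_nonneg _) zero_le_one, Complex.sq_norm, Complex.normSq_apply, h, one_pow]

/-- No proper colouring has a monochromatic triangle `1, ω, ω²`. -/
theorem partB (f : ℂ → Fin 4) (hf : Proper f) : ¬ (f 1 = f om ∧ f 1 = f (om * om)) := by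
  rintro ⟨h1, h2⟩
  have a1 : f 1 ≠ f 0 := hf _ _ (by simp)
  have a2 : f 1 ≠ f ⟨1 / 2, √3 / 2⟩ := hf _ _ (norm_eq_one_of (by
    simp only [Complex.sub_re, Complex.sub_im, Complex.one_re, Complex.one_im]
    linear_combination (1 / 4) * sqrt3_sq))
  have a3 : f 0 ≠ f ⟨1 / 2, √3 / 2⟩ := hf _ _ (norm_eq_one_of (by
    simp only [Complex.sub_re, Complex.sub_im, Complex.zero_re, Complex.zero_im]
    linear_combination (1 / 4) * sqrt3_sq))
  obtain ⟨σ, s0, s1, s2⟩ := exists_perm3 _ _ _ a1 a2 a3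
  have hg : Proper (fun z => σ (f z)) := hf.perm σ
  refine checkAll_sound _ _ (goodM hg (by norm_num) edgesB) 12512976 ?_ prfB []
    (by intro C hC; simp at hC) checkedB
  have c1 : vcol (fun z => σ (f z)) 11 12 crdB 1 = 1 := by simp only [vcol, vB1, s1]
  have c2 : vcol (fun z => σ (f z)) 11 12 crdB 2 = 0 := by simp only [vcol, vB2, s0]
  have c3 : vcol (fun z => σ (f z)) 11 12 crdB 3 = 0 := by simp only [vcol, vB3, ← h1, s0]
  have c4 : vcol (fun z => σ (f z)) 11 12 crdB 4 = 0 := by simp only [vcol, vB4, ← h2, s0]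
  have c5 : vcol (fun z => σ (f z)) 11 12 crdB 5 = 2 := by simp only [vcol, vB5, s2]
  generalize vcol (fun z => σ (f z)) 11 12 crdB = c at c1 c2 c3 c4 c5
  intro v
  by_cases hv : 6 ≤ v
  · apply Nat.testBit_lt_two_pow
    calc 12512976 < 2 ^ 24 := by norm_num
      _ ≤ _ := Nat.pow_le_pow_right (by norm_num) (by omega)
  · have hv' : v < 6 := by omega
    interval_cases v
    · generalize c 0 = j
      revert j
      decide
    · rw [c1]; decide
    · rw [c2]; decide
    · rw [c3]; decide
    · rw [c4]; decide
    · rw [c5]; decide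

/-- A proper colouring without monochromatic triangles of side `√3`. -/
def NoTri (f : ℂ → Fin 4) : Prop :=
  ∀ p q : ℂ, ‖q‖ = 1 → ¬ (f (p + q) = f (p + q * om) ∧ f (p + q) = f (p + q * (om * om)))

theorem noTri {f : ℂ → Fin 4} (hf : Proper f) : NoTri f := by
  intro p q hq h
  apply partB _ (hf.comp p q hq)
  simpa only [mul_one] using h

/-- The clause saying that `x, y, z` do not all have colour `k`, where `n = 15 - 2 ^ k`. -/
def triClause (x y z n : Nat) : Nat :=
  Nat.lor (Nat.lor (Nat.shiftLeft n (Nat.mul 4 x)) (Nat.shiftLeft n (Nat.mul 4 y)))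
    (Nat.shiftLeft n (Nat.mul 4 z))

/-- Check that `(p, x, y, z)` is a centre with three vertices of a triangle. -/
noncomputable def triOk (m D : Nat) (crd : Tree) (t : Nat × Nat × Nat × Nat) : Bool :=
  and (isUnit m D ((co (crd.get t.2.1)).sub (co (crd.get t.1))))
    (and (((co (crd.get t.2.2.1)).sub (co (crd.get t.1))).dbl.eqb
        ((co (crd.get t.2.1)).sub (co (crd.get t.1))).w2)
      (((co (crd.get t.2.2.2)).sub (co (crd.get t.1))).dbl.eqb
        ((co (crd.get t.2.2.1)).sub (co (crd.get t.1))).w2))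

/-- The clauses of a list of triangles. -/
def triDB : List (Nat × Nat × Nat × Nat) → List Nat
  | [] => []
  | t :: l => triClause t.2.1 t.2.2.1 t.2.2.2 14 :: triClause t.2.1 t.2.2.1 t.2.2.2 13 ::
      triClause t.2.1 t.2.2.1 t.2.2.2 11 :: triClause t.2.1 t.2.2.1 t.2.2.2 7 :: triDB l

theorem shiftBit {c : Nat → Fin 4} {n k w x : Nat} (hk : k < 4) (hn : n + 2 ^ k = 15)
    (hx : (c x : Nat) = k) : (n <<< (4 * x)).testBit (4 * w + (c w : Nat)) = false := by
  rw [Nat.testBit_shiftLeft]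
  by_contra hne
  rw [Bool.not_eq_false, Bool.and_eq_true, decide_eq_true_eq] at hne
  obtain ⟨h1, h2⟩ := hne
  by_cases hlt : 4 * w + (c w : Nat) - 4 * x < 4
  · have := (c w).2
    obtain rfl : w = x := by omega
    have h3 : 4 * w + (c w : Nat) - 4 * w = k := by omega
    rw [h3] at h2
    have hn2 : n = 15 - 2 ^ k := by omega
    subst hn2
    interval_cases k <;> exact absurd h2 (by decide)
  · have : Nat.testBit n (4 * w + (c w : Nat) - 4 * x) = false := by
      apply Nat.testBit_lt_two_pow
      calc n < 2 ^ 4 := by have : 0 < 2 ^ k := by positivity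
                           omega
        _ ≤ _ := Nat.pow_le_pow_right (by norm_num) (by omega)
    rw [this] at h2
    exact absurd h2 (by decide)

theorem triClause_sound {c : Nat → Fin 4} {x y z : Nat} (h : ¬ (c x = c y ∧ c x = c z))
    {n k : Nat} (hk : k < 4) (hn : n + 2 ^ k = 15) : ¬ Resp c (triClause x y z n) := by
  intro hR
  have key : ∀ u, (u = x ∨ u = y ∨ u = z) → (c u : Nat) = k := by
    intro u hu
    have h1 := hR u
    have e : triClause x y z n = ((n <<< (4 * x)) ||| (n <<< (4 * y))) ||| (n <<< (4 * z)) := rfl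
    rw [e, Nat.testBit_or, Nat.testBit_or, Bool.or_eq_false_iff, Bool.or_eq_false_iff] at h1
    have h2 : (n <<< (4 * u)).testBit (4 * u + (c u : Nat)) = false := by
      rcases hu with rfl | rfl | rfl
      · exact h1.1.1
      · exact h1.1.2
      · exact h1.2
    rw [Nat.testBit_shiftLeft] at h2
    have h3 : 4 * u + (c u : Nat) - 4 * u = (c u : Nat) := by omega
    have h4 : 4 * u ≤ 4 * u + (c u : Nat) := by omega
    rw [h3, decide_eq_true h4, Bool.true_and] at h2
    exact nib_color n k _ hk (c u).2 hn h2
  apply h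
  constructor
  · exact Fin.ext ((key x (by simp)).trans (key y (by simp)).symm)
  · exact Fin.ext ((key x (by simp)).trans (key z (by simp)).symm)

theorem triDB_sound {f : ℂ → Fin 4} (hf : NoTri f) {m D : Nat} (hD : 0 < D) {crd : Tree}
    (l : List (Nat × Nat × Nat × Nat)) (h : l.all (triOk m D crd) = true) :
    ∀ C ∈ triDB l, ¬ Resp (vcol f m D crd) C := by
  induction l with
  | nil => intro C hC; simp [triDB] at hC
  | cons t l ih =>
    rw [List.all_cons, Bool.and_eq_true] at h
    obtain ⟨h1, h2⟩ := h
    obtain ⟨p, x, y, z⟩ := t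
    simp only [triOk, Bool.and_eq_true] at h1
    obtain ⟨u1, u2, u3⟩ := h1
    have n1 := isUnit_norm hD u1
    have e1 := w2_pt (m := m) hD u2
    have e2 := w2_pt (m := m) hD u3
    have hne := hf (pt m D (co (crd.get p)))
      (pt m D (co (crd.get x)) - pt m D (co (crd.get p))) n1
    have e3 : pt m D (co (crd.get z)) = pt m D (co (crd.get p)) +
        (pt m D (co (crd.get x)) - pt m D (co (crd.get p))) * (om * om) := by
      rw [e2, e1]; ring
    rw [← e1, ← e3, add_sub_cancel] at hne
    have hne' : ¬ (vcol f m D crd x = vcol f m D crd y ∧ vcol f m D crd x = vcol f m D crd z) := hne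
    intro C hC
    simp only [triDB, List.mem_cons] at hC
    rcases hC with rfl | rfl | rfl | rfl | hC
    · exact triClause_sound hne' (k := 0) (by norm_num) (by norm_num)
    · exact triClause_sound hne' (k := 1) (by norm_num) (by norm_num)
    · exact triClause_sound hne' (k := 2) (by norm_num) (by norm_num)
    · exact triClause_sound hne' (k := 3) (by norm_num) (by norm_num)
    · exact ih h2 C hC

theorem edgesA : edgeCheck 15 16 crdA nbA 1024 = true := by decide +kernel

theorem trisA_ok : trisA.all (triOk 15 16 crdA) = true := by decide +kernel

theorem checkedA : checkAll (fun v => maskOf (nbrs nbA v)) 3552 prfA (triDB trisA) = true := by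
  decide +kernel

theorem vA1 : pt 15 16 (co (crdA.get 1)) = 2 := by
  have h : crdA.get 1 = 2155905184 := by decide +kernel
  have hc : co 2155905184 = ⟨32, 0, 0, 0⟩ := by rfl
  rw [h, hc]
  apply Complex.ext <;> norm_num [pt]

theorem vA2 : pt 15 16 (co (crdA.get 2)) = -2 := by
  have h : crdA.get 2 = 2155905120 := by decide +kernel
  have hc : co 2155905120 = ⟨-32, 0, 0, 0⟩ := by rfl
  rw [h, hc]
  apply Complex.ext <;> norm_num [pt]

/-- Points at distance four have the same colour. -/
theorem partA (f : ℂ → Fin 4) (hf : Proper f) : f 2 = f (-2) := by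
  by_contra hne
  obtain ⟨σ, s0, s1⟩ := exists_perm2 _ _ hne
  have hg : Proper (fun z => σ (f z)) := hf.perm σ
  refine checkAll_sound _ _ (goodM hg (by norm_num) edgesA) 3552 ?_ prfA (triDB trisA)
    (triDB_sound (noTri hg) (by norm_num) trisA trisA_ok) checkedA
  have c1 : vcol (fun z => σ (f z)) 15 16 crdA 1 = 0 := by simp only [vcol, vA1, s0]
  have c2 : vcol (fun z => σ (f z)) 15 16 crdA 2 = 1 := by simp only [vcol, vA2, s1]
  generalize vcol (fun z => σ (f z)) 15 16 crdA = c at c1 c2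
  intro v
  by_cases hv : 3 ≤ v
  · apply Nat.testBit_lt_two_pow
    calc 3552 < 2 ^ 12 := by norm_num
      _ ≤ _ := Nat.pow_le_pow_right (by norm_num) (by omega)
  · have hv' : v < 3 := by omega
    interval_cases v
    · generalize c 0 = j
      revert j
      decide
    · rw [c1]; decide
    · rw [c2]; decide

theorem not_proper (f : ℂ → Fin 4) : ¬ Proper f := by
  intro hf
  have far : ∀ u : ℂ, ‖u‖ = 1 → f 0 = f (4 * u) := by
    intro u hu
    have h := partA _ (hf.comp (2 * u) u hu)
    have e1 : 2 * u + u * 2 = 4 * u := by ring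
    have e2 : 2 * u + u * (-2) = 0 := by ring
    simp only [e1, e2] at h
    exact h.symm
  have h7 : √(7 : ℝ) * √(7 : ℝ) = 7 := Real.mul_self_sqrt (by norm_num)
  have h1 := far 1 (by simp)
  have h2 := far ⟨31 / 32, 3 * √7 / 32⟩ (norm_eq_one_of (by
    simp only
    linear_combination (9 / 1024) * h7))
  refine hf _ _ (norm_eq_one_of ?_) (h1.symm.trans h2)
  simp only [Complex.sub_re, Complex.sub_im, Complex.mul_re, Complex.mul_im, Complex.one_re,
    Complex.one_im, Complex.re_ofNat, Complex.im_ofNat]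
  linear_combination (9 / 64) * h7

end HN

theorem stmt_19 :
    ¬ (∃ c : EuclideanSpace ℝ (Fin 2) → Fin 4, ∀ x y : EuclideanSpace ℝ (Fin 2), dist x y = 1 → c x ≠ c y) := by
  rintro ⟨c, hc⟩
  refine HN.not_proper (fun z => c !₂[z.re, z.im]) ?_
  intro x y h
  apply hc
  rw [EuclideanSpace.dist_eq, ← h, Complex.norm_def, Complex.normSq_apply]
  simp [Fin.sum_univ_two, Real.dist_eq, pow_two]
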